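/- arXiv:1701.06377 — 5 statements merged into one kernel-verified Lean document; each statement's English description precedes it below -/
import Mathlib

section
/- Let n ≥ 1 and let k ≥ 1 satisfy 2k ≤ n+1. The number of arithmetical structures (d, r) on the path P_{n+2} with r(1) = 2 and d(1) = k equals binomial(n−1, 2k−2) · 2^{n+1−2k} · C_{k−1}, where C_{k−1} is the Catalan number. -/
/-!
An arithmetical structure is determined by its vector `r`, and `d i = 1` means that `r i` is the sum
of its neighbours. When `r(1) = 2`, the end entries of `r` are `1` and the inner entries are at least
`2`. Such vectors correspond bijectively to binary trees with `n` nodes: start with `1, 1` and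
repeatedly insert between two adjacent entries their sum (`ArithPath.seq`). Conversely, the first
occurrence of the maximum inner entry must equal its neighbour sum, and deleting it leaves a shorter
vector of the same kind (`ArithPath.exists_seq_eq`); the tree is recovered from the position of the
smallest label, that of the root (`ArithPath.seq_injective`). Under this bijection `d(1)` is the
number of childless nodes (`ArithPath.cnt_seq`).

It remains to count the binary trees with `n` nodes of which `k` are childless. Let `F_k` be their
generating function in the number of nodes. Splitting at the root gives `F_1 = X (1 + 2 F_1)` and
`F_k = X (2 F_k + ∑ F_i F_j)` for `k ≥ 2`, where the sum is over `i + j = k` with `i, j ≥ 1`. By the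
Catalan recursion `F_{j+1} = C_j (X / (1 - 2X))^(2j+1)` (`ArithPath.leafSeries_succ`), and the
binomial series yields the coefficient of `X^n`.
-/

def IsArithPath (n : ℕ) (d r : Fin n → ℕ) : Prop :=
  (∀ i, 0 < d i) ∧ (∀ i, 0 < r i) ∧ Finset.univ.gcd r = 1 ∧
  ∀ i : Fin n, d i * r i =
    (if 0 < i.val then r ⟨i.val - 1, Nat.lt_of_le_of_lt (Nat.sub_le _ _) i.isLt⟩ else 0) +
    (if h : i.val + 1 < n then r ⟨i.val + 1, h⟩ else 0)

namespace ArithPath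

open BinaryTree Finset

/-! ### Counting binary trees by childless nodes -/

/-- The number of childless nodes of a binary tree. (Mathlib's `BinaryTree.numLeaves` counts the
empty subtrees `nil` instead.) -/
def leafNodes : BinaryTree Unit → ℕ
  | nil => 0
  | node _ l r => leafNodes l + (if l = nil ∧ r = nil then 1 else 0) + leafNodes r

/-- The generating polynomial, by number of childless nodes, of the binary trees with `n` nodes. -/
noncomputable def treePoly (n : ℕ) : Polynomial ℤ :=
  ∑ t ∈ treesOfNumNodesEq n, Polynomial.X ^ leafNodes t

lemma treePoly_zero : treePoly 0 = 1 := by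
  simp [treePoly, leafNodes]

lemma treePoly_succ_eq (n : ℕ) : treePoly (n + 1) =
    ∑ ij ∈ antidiagonal n, ∑ x ∈ treesOfNumNodesEq ij.1 ×ˢ treesOfNumNodesEq ij.2,
      Polynomial.X ^ leafNodes (node () x.1 x.2) := by
  rw [treePoly, treesOfNumNodesEq_succ, sum_biUnion]
  · refine sum_congr rfl fun ij _ => ?_
    rw [pairwiseNode, sum_map]
    rfl
  · simp_rw [Set.PairwiseDisjoint, Set.Pairwise, disjoint_left]
    aesop

lemma treePoly_one : treePoly 1 = Polynomial.X := by
  rw [treePoly_succ_eq]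
  simp [leafNodes]

lemma treePoly_succ (n : ℕ) : treePoly (n + 2) =
    ∑ ij ∈ antidiagonal (n + 1), treePoly ij.1 * treePoly ij.2 := by
  rw [treePoly_succ_eq]
  refine sum_congr rfl fun ij hij => ?_
  rw [treePoly, treePoly, sum_mul_sum, ← sum_product']
  refine sum_congr rfl fun x hx => ?_
  rw [mem_product, mem_treesOfNumNodesEq, mem_treesOfNumNodesEq] at hx
  rw [HasAntidiagonal.mem_antidiagonal] at hij
  have : ¬ (x.1 = nil ∧ x.2 = nil) := by
    rintro ⟨h1, h2⟩
    rw [h1, h2] at hx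
    simp at hx
    omega
  simp [leafNodes, this, pow_add]

/-- The ordinary generating function, by number of nodes, of the binary trees with exactly `k`
childless nodes. -/
noncomputable def leafSeries (k : ℕ) : PowerSeries ℤ :=
  PowerSeries.mk fun n => (treePoly n).coeff k

/-- Splitting a tree at its root. The correction terms account for the empty tree and for the
one-node tree, whose root is itself childless. -/
lemma leafSeries_eq (k : ℕ) : leafSeries k =
    (if k = 0 then 1 else 0) + PowerSeries.X *
      (∑ ij ∈ antidiagonal k, leafSeries ij.1 * leafSeries ij.2
        + (if k = 1 then 1 else 0) - (if k = 0 then 1 else 0)) := by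
  ext n
  rcases n with _ | _ | n
  · simp only [leafSeries, PowerSeries.coeff_mk, treePoly_zero, map_add,
      PowerSeries.coeff_zero_X_mul, Polynomial.coeff_one]
    split_ifs <;> simp
  · have h : ∑ ij ∈ antidiagonal k, (treePoly 0).coeff ij.1 * (treePoly 0).coeff ij.2
        = if k = 0 then 1 else 0 := by
      rw [← Polynomial.coeff_mul, treePoly_zero]
      simp [Polynomial.coeff_one]
    rw [map_add, PowerSeries.coeff_succ_X_mul, map_sub, map_add, map_sum]
    simp only [leafSeries, PowerSeries.coeff_mk, PowerSeries.coeff_mul, zero_add, treePoly_one,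
      Nat.antidiagonal_zero, sum_singleton, h, Polynomial.coeff_X]
    split_ifs <;> first | omega | simp [PowerSeries.coeff_one]
  · rw [map_add, PowerSeries.coeff_succ_X_mul, map_sub, map_add, map_sum]
    simp only [leafSeries, PowerSeries.coeff_mk, PowerSeries.coeff_mul, treePoly_succ,
      Polynomial.finsetSum_coeff, Polynomial.coeff_mul]
    rw [sum_comm]
    split_ifs <;> simp [PowerSeries.coeff_one]

lemma card_trees (n k : ℕ) :
    (((treesOfNumNodesEq n).filter fun t => leafNodes t = k).card : ℤ) =
    PowerSeries.coeff n (leafSeries k) := by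
  simp [leafSeries, treePoly, Polynomial.finsetSum_coeff, Polynomial.coeff_X_pow, eq_comm]

lemma leafNodes_eq_zero (t : BinaryTree Unit) : leafNodes t = 0 ↔ t = nil := by
  induction t with
  | nil => simp [leafNodes]
  | node _ l r ihl ihr =>
    simp only [leafNodes, Nat.add_eq_zero_iff, ihl, ihr, reduceCtorEq, iff_false]
    rintro ⟨⟨rfl, h⟩, rfl⟩
    simp at h

lemma leafSeries_zero : leafSeries 0 = 1 := by
  ext n
  rw [← card_trees]
  rcases n with _ | n
  · simp [leafNodes, filter_singleton]
  · rw [filter_false_of_mem]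
    · simp [PowerSeries.coeff_one]
    · intro t ht h
      rw [leafNodes_eq_zero] at h
      simp [h] at ht

/-- The series `1 / (1 - 2X)`. -/
noncomputable def geomTwo : PowerSeries ℤ := PowerSeries.rescale 2 (PowerSeries.mk 1)

lemma geomTwo_mul : geomTwo * (1 - 2 * PowerSeries.X) = 1 := by
  have := congrArg (PowerSeries.rescale (2 : ℤ)) (PowerSeries.mk_one_mul_one_sub_eq_one ℤ)
  simpa [PowerSeries.rescale_X, geomTwo] using this

/-- Closed form `C_j X^(2j+1) / (1 - 2X)^(2j+1)` of the generating function, by the Catalan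
recursion. -/
lemma leafSeries_succ (j : ℕ) :
    leafSeries (j + 1) = (catalan j : PowerSeries ℤ) * (PowerSeries.X * geomTwo) ^ (2 * j + 1) := by
  -- The term `2 * A` comes from the trees whose root has exactly one empty subtree.
  have key : ∀ A B : PowerSeries ℤ, A = PowerSeries.X * (2 * A + B) →
      A = PowerSeries.X * geomTwo * B := by
    intro A B h
    linear_combination (-A) * geomTwo_mul + geomTwo * h
  induction j using Nat.strong_induction_on with
  | _ j ih =>
  rcases j with _ | j
  · have h := leafSeries_eq 1
    simp [Nat.antidiagonal_succ, leafSeries_zero] at h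
    have := key (leafSeries 1) 1 (by linear_combination h)
    simpa using this
  · have h := leafSeries_eq (j + 2)
    rw [Nat.sum_antidiagonal_succ, Nat.sum_antidiagonal_succ'] at h
    simp only [leafSeries_zero] at h
    have := key (leafSeries (j + 2))
      (∑ p ∈ antidiagonal j, leafSeries (p.1 + 1) * leafSeries (p.2 + 1))
      (by simp at h; linear_combination h)
    rw [this, catalan_succ']
    push_cast
    rw [mul_sum, sum_mul]
    refine sum_congr rfl fun p hp => ?_
    rw [HasAntidiagonal.mem_antidiagonal] at hp
    rw [ih p.1 (by omega), ih p.2 (by omega), ← hp]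
    ring

lemma card_trees_eq (n k : ℕ) (hk : 1 ≤ k) (h2k : 2 * k ≤ n + 1) :
    ((treesOfNumNodesEq n).filter fun t => leafNodes t = k).card =
    (n - 1).choose (2 * k - 2) * 2 ^ (n + 1 - 2 * k) * catalan (k - 1) := by
  obtain ⟨j, rfl⟩ := Nat.exists_eq_add_of_le' hk
  obtain ⟨e, rfl⟩ := Nat.exists_eq_add_of_le (show 2 * j + 1 ≤ n by omega)
  rw [← Nat.cast_inj (R := ℤ), card_trees, leafSeries_succ, mul_pow, geomTwo, ← map_pow,
    PowerSeries.mk_one_pow_eq_mk_choose_add, PowerSeries.rescale_mk, mul_left_comm, add_comm _ e,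
    PowerSeries.coeff_X_pow_mul]
  have : (catalan j : PowerSeries ℤ) = PowerSeries.C (catalan j : ℤ) := by simp
  rw [this, PowerSeries.coeff_C_mul, PowerSeries.coeff_mk]
  have h1 : e + (2 * j + 1) - 1 = 2 * j + e := by omega
  have h2 : 2 * (j + 1) - 2 = 2 * j := by omega
  have h3 : e + (2 * j + 1) + 1 - 2 * (j + 1) = e := by omega
  rw [h1, h2, h3]
  simp
  ring

/-! ### Neighbour conditions on lists -/

/-- The first entry of `l`, or `q` if `l` is empty. -/
def hd : List ℕ → ℕ → ℕ
  | [], q => q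
  | x :: _, _ => x

/-- The last entry of `l`, or `p` if `l` is empty. -/
def lst : ℕ → List ℕ → ℕ
  | p, [] => p
  | _, x :: l => lst x l

/-- Every entry of `l` divides the sum of its two neighbours in `p :: l ++ [q]`. -/
def NbDvd : ℕ → List ℕ → ℕ → Prop
  | _, [], _ => True
  | p, x :: l, q => x ∣ p + hd l q ∧ NbDvd x l q

/-- The number of entries of `l` equal to the sum of their two neighbours in `p :: l ++ [q]`. -/
def cnt : ℕ → List ℕ → ℕ → ℕ
  | _, [], _ => 0
  | p, x :: l, q => (if x = p + hd l q then 1 else 0) + cnt x l q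

/-- The labels, in inorder, of the nodes of a binary tree placed between the values `a` and `b`:
every node carries the sum of the two labels between which it is inserted. -/
def seq : ℕ → ℕ → BinaryTree Unit → List ℕ
  | _, _, nil => []
  | a, b, node _ l r => seq a (a + b) l ++ (a + b) :: seq (a + b) b r

@[simp] lemma hd_nil (q : ℕ) : hd [] q = q := rfl

@[simp] lemma hd_cons (x : ℕ) (l : List ℕ) (q : ℕ) : hd (x :: l) q = x := rfl

lemma hd_append (l l' : List ℕ) (q : ℕ) : hd (l ++ l') q = hd l (hd l' q) := by
  cases l <;> rfl

lemma lst_append (p : ℕ) (l l' : List ℕ) : lst p (l ++ l') = lst (lst p l) l' := by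
  induction l generalizing p with
  | nil => rfl
  | cons x l ih => exact ih x

lemma dvd_append (p : ℕ) (l l' : List ℕ) (q : ℕ) :
    NbDvd p (l ++ l') q ↔ NbDvd p l (hd l' q) ∧ NbDvd (lst p l) l' q := by
  induction l generalizing p with
  | nil => simp [NbDvd, lst]
  | cons x l ih => simp [NbDvd, lst, ih, hd_append, and_assoc]

lemma cnt_append (p : ℕ) (l l' : List ℕ) (q : ℕ) :
    cnt p (l ++ l') q = cnt p l (hd l' q) + cnt (lst p l) l' q := by
  induction l generalizing p with
  | nil => simp [cnt, lst]
  | cons x l ih => simp [cnt, lst, ih, hd_append, add_assoc]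

/-- Replacing the right boundary value `h` by its sum with the last entry preserves all
divisibilities; with `dvd_left`, this allows an entry equal to its neighbour sum to be deleted. -/
lemma dvd_right (p : ℕ) (l : List ℕ) (h : ℕ) : NbDvd p l (lst p l + h) ↔ NbDvd p l h := by
  induction l generalizing p with
  | nil => simp [NbDvd]
  | cons x l ih =>
    cases l with
    | nil =>
      simp only [NbDvd, lst, hd_nil, and_true]
      rw [add_left_comm]
      exact Nat.dvd_add_right (dvd_refl x)
    | cons y l =>
      simp only [NbDvd, lst, hd_cons] at ih ⊢
      rw [ih]

lemma dvd_left (h : ℕ) (l : List ℕ) (q : ℕ) : NbDvd (h + hd l q) l q ↔ NbDvd h l q := by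
  cases l with
  | nil => simp [NbDvd]
  | cons x l =>
    simp only [NbDvd, hd_cons]
    rw [add_right_comm, Nat.dvd_add_self_right]

/-! ### From trees to sequences -/

lemma length_seq (a b : ℕ) (t : BinaryTree Unit) : (seq a b t).length = t.numNodes := by
  induction t generalizing a b with
  | nil => rfl
  | node _ l r ihl ihr => simp [seq, ihl, ihr, add_assoc]

lemma le_of_mem_seq {a b x : ℕ} {t : BinaryTree Unit} (h : x ∈ seq a b t) : a + b ≤ x := by
  induction t generalizing a b with
  | nil => simp [seq] at h
  | node _ l r ihl ihr =>
    simp only [seq, List.mem_append, List.mem_cons] at h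
    rcases h with h | h | h
    · have := ihl h; omega
    · omega
    · have := ihr h; omega

lemma seq_injective {a b : ℕ} (ha : 0 < a) (hb : 0 < b) : Function.Injective (seq a b) := by
  intro t t' h
  induction t generalizing a b t' with
  | nil =>
    cases t' with
    | nil => rfl
    | node => simp [seq] at h
  | node _ l r ihl ihr =>
    cases t' with
    | nil => simp [seq] at h
    | node _ l₂ r₂ =>
      -- The root label `a + b` is smaller than all other labels, so its position is determined.
      have h1 : ∀ s, a + b ∉ seq a (a + b) s := fun s hs => by
        have := le_of_mem_seq hs; omega
      have h2 : ∀ s, a + b ∉ seq (a + b) b s := fun s hs => by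
        have := le_of_mem_seq hs; omega
      simp only [seq] at h
      rw [List.append_cons_inj_of_notMem (h1 _) (h2 _)] at h
      rw [ihl ha (by omega) h.1, ihr (by omega) hb h.2.2]

/-- The first label is `c * a + b`, where `c` is the length of the left spine of the tree. -/
lemma exists_hd_seq (a b : ℕ) (t : BinaryTree Unit) :
    ∃ c, hd (seq a b t) b = c * a + b ∧ (c = 0 ↔ t = nil) := by
  induction t generalizing a b with
  | nil => exact ⟨0, by simp [seq]⟩
  | node _ l r ihl ihr =>
    obtain ⟨c, hc, -⟩ := ihl a (a + b)
    refine ⟨c + 1, ?_, by simp⟩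
    simp only [seq, hd_append, hd_cons, hc]
    ring

/-- The last label is `a + c * b`, where `c` is the length of the right spine of the tree. -/
lemma exists_lst_seq (a b : ℕ) (t : BinaryTree Unit) :
    ∃ c, lst a (seq a b t) = a + c * b ∧ (c = 0 ↔ t = nil) := by
  induction t generalizing a b with
  | nil => exact ⟨0, by simp [seq, lst]⟩
  | node _ l r ihl ihr =>
    obtain ⟨c, hc, -⟩ := ihr (a + b) b
    refine ⟨c + 1, ?_, by simp⟩
    simp only [seq, lst_append, lst, hc]
    ring

lemma dvd_seq (a b : ℕ) (t : BinaryTree Unit) : NbDvd a (seq a b t) b := by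
  induction t generalizing a b with
  | nil => trivial
  | node _ l r ihl ihr =>
    obtain ⟨c, hc, -⟩ := exists_hd_seq (a + b) b r
    obtain ⟨c', hc', -⟩ := exists_lst_seq a (a + b) l
    simp only [seq, dvd_append, NbDvd, hd_cons]
    refine ⟨ihl _ _, ⟨c + c' + 1, ?_⟩, ihr _ _⟩
    rw [hc, hc']
    ring

lemma cnt_seq {a b : ℕ} (ha : 0 < a) (hb : 0 < b) (t : BinaryTree Unit) :
    cnt a (seq a b t) b = leafNodes t := by
  induction t generalizing a b with
  | nil => rfl
  | node _ l r ihl ihr =>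
    obtain ⟨c, hc, hr⟩ := exists_hd_seq (a + b) b r
    obtain ⟨c', hc', hl⟩ := exists_lst_seq a (a + b) l
    simp only [seq, cnt_append, cnt, hd_cons, leafNodes, ihl ha (show 0 < a + b by omega),
      ihr (show 0 < a + b by omega) hb, ← hr, ← hl, add_assoc]
    congr 3
    rw [hc, hc', eq_iff_iff]
    constructor
    · intro h
      have h0 : (c' + c) * (a + b) = 0 := by linarith
      have : c' + c = 0 := by
        rcases Nat.mul_eq_zero.mp h0 with h | h <;> omega
      omega
    · rintro ⟨rfl, rfl⟩
      ring

/-! ### From sequences to trees -/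

/-- Inserting between two adjacent labels their sum amounts to attaching a new childless node. -/
lemma exists_insert {a b : ℕ} {t : BinaryTree Unit} {l₁ l₂ : List ℕ}
    (h : seq a b t = l₁ ++ l₂) :
    ∃ t', seq a b t' = l₁ ++ (lst a l₁ + hd l₂ b) :: l₂ := by
  induction t generalizing a b l₁ l₂ with
  | nil =>
    simp only [seq] at h
    obtain ⟨rfl, rfl⟩ := List.append_eq_nil_iff.mp h.symm
    exact ⟨node () nil nil, rfl⟩
  | node u l r ihl ihr =>
    simp only [seq] at h
    rcases List.append_eq_append_iff.mp h with ⟨c, hc, hc'⟩ | ⟨c, hc, hc'⟩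
    · rcases c with _ | ⟨x, c⟩
      · simp only [List.append_nil, List.nil_append] at hc hc'
        obtain ⟨t', ht'⟩ := ihl (a := a) (b := a + b) (l₁ := l₁) (l₂ := []) (by simp [hc])
        refine ⟨node () t' r, ?_⟩
        simp [seq, ht', ← hc', hd_nil, hd_cons]
      · simp only [List.cons_append, List.cons.injEq] at hc'
        obtain ⟨rfl, hc'⟩ := hc'
        obtain ⟨t', ht'⟩ := ihr hc'
        refine ⟨node () l t', ?_⟩
        simp [seq, ht', hc, lst_append, lst]
    · obtain ⟨t', ht'⟩ := ihl hc
      refine ⟨node () t' r, ?_⟩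
      simp [seq, ht', hc', hd_append]

/-- A nonempty list splits at the first occurrence of its maximum. -/
lemma exists_max_split (l : List ℕ) (hl : l ≠ []) :
    ∃ l₁ x l₂, l = l₁ ++ x :: l₂ ∧ (∀ y ∈ l₁, y < x) ∧ ∀ y ∈ l₂, y ≤ x := by
  induction l with
  | nil => exact absurd rfl hl
  | cons z l ih =>
    rcases eq_or_ne l [] with rfl | h
    · exact ⟨[], z, [], by simp⟩
    · obtain ⟨l₁, x, l₂, rfl, h1, h2⟩ := ih h
      rcases lt_or_ge z x with hz | hz
      · exact ⟨z :: l₁, x, l₂, by simp, by simpa using ⟨hz, h1⟩, h2⟩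
      · refine ⟨[], z, l₁ ++ x :: l₂, by simp, by simp, ?_⟩
        intro y hy
        simp only [List.mem_append, List.mem_cons] at hy
        rcases hy with hy | hy | hy
        · have := h1 y hy; omega
        · omega
        · have := h2 y hy; omega

lemma hd_mem (l : List ℕ) (q : ℕ) : hd l q = q ∨ hd l q ∈ l := by
  cases l <;> simp [hd_nil, hd_cons]

lemma lst_mem (p : ℕ) (l : List ℕ) : lst p l = p ∨ lst p l ∈ l := by
  induction l generalizing p with
  | nil => simp [lst]
  | cons x l ih => rcases ih x with h | h <;> simp [lst, h]

/-- Induction on the length: the first occurrence of the maximum is the sum of its neighbours, so it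
can be deleted, and reinserted into the tree of the shorter list as a childless node. -/
lemma exists_seq_eq (l : List ℕ) (h2 : ∀ x ∈ l, 2 ≤ x) (hd' : NbDvd 1 l 1) :
    ∃ t, seq 1 1 t = l := by
  induction hn : l.length generalizing l with
  | zero => exact ⟨nil, by simp [seq, List.length_eq_zero_iff.mp hn]⟩
  | succ n ih =>
    obtain ⟨l₁, x, l₂, rfl, hm1, hm2⟩ := exists_max_split l (by rintro rfl; simp at hn)
    simp only [List.mem_append, List.mem_cons] at h2
    simp only [dvd_append, NbDvd, hd_cons] at hd'
    obtain ⟨hA, ⟨c, hc⟩, hB⟩ := hd'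
    have hx : 2 ≤ x := h2 x (by simp)
    have b1 : 0 < lst 1 l₁ ∧ lst 1 l₁ < x := by
      rcases lst_mem 1 l₁ with h | h
      · omega
      · have := hm1 _ h; have := h2 _ (Or.inl h); omega
    have b2 : 0 < hd l₂ 1 ∧ hd l₂ 1 ≤ x := by
      rcases hd_mem l₂ 1 with h | h
      · omega
      · have := hm2 _ h; have := h2 _ (Or.inr (Or.inr h)); omega
    -- The neighbour sum is a positive multiple of `x` below `2 * x`, hence equal to `x`.
    have hxe : x = lst 1 l₁ + hd l₂ 1 := by
      have hc2 : c < 2 := by by_contra! h; nlinarith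
      interval_cases c <;> omega
    have hD : NbDvd 1 (l₁ ++ l₂) 1 := by
      rw [dvd_append, ← dvd_right, ← dvd_left (lst 1 l₁), ← hxe]
      exact ⟨hA, hB⟩
    obtain ⟨t, ht⟩ := ih (l₁ ++ l₂)
      (fun y hy => h2 y (by rcases List.mem_append.mp hy with h | h <;> simp [h])) hD
      (by simp at hn ⊢; omega)
    obtain ⟨t', ht'⟩ := exists_insert ht
    exact ⟨t', by rw [ht', ← hxe]⟩

/-! ### Arithmetical structures as lists -/

/-- The sum of the neighbours of the entry `i` of `r`, where `r` is preceded by `p` and followed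
by `q`. -/
def nb {n : ℕ} (p : ℕ) (r : Fin n → ℕ) (q : ℕ) (i : Fin n) : ℕ :=
  (if 0 < i.val then r ⟨i.val - 1, Nat.lt_of_le_of_lt (Nat.sub_le _ _) i.isLt⟩ else p) +
    (if h : i.val + 1 < n then r ⟨i.val + 1, h⟩ else q)

lemma nb_zero {n : ℕ} (p : ℕ) (r : Fin (n + 1) → ℕ) (q : ℕ) :
    nb p r q 0 = p + hd (List.ofFn fun i : Fin n => r i.succ) q := by
  cases n <;> simp [nb, hd_nil, hd_cons, List.ofFn_succ]

lemma nb_succ {n : ℕ} (p : ℕ) (r : Fin (n + 1) → ℕ) (q : ℕ) (i : Fin n) :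
    nb p r q i.succ = nb (r 0) (fun i : Fin n => r i.succ) q i := by
  obtain ⟨i, hi⟩ := i
  cases i
  · simp [nb]
    rfl
  · simp [nb]

lemma forall_dvd_nb {n : ℕ} (p : ℕ) (r : Fin n → ℕ) (q : ℕ) :
    (∀ i, r i ∣ nb p r q i) ↔ NbDvd p (List.ofFn r) q := by
  induction n generalizing p with
  | zero => simp [NbDvd]
  | succ n ih =>
    rw [Fin.forall_fin_succ, List.ofFn_succ, NbDvd, nb_zero, ← ih]
    simp only [nb_succ]

lemma card_eq_nb {n : ℕ} (p : ℕ) (r : Fin n → ℕ) (q : ℕ) :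
    (univ.filter fun i => r i = nb p r q i).card = cnt p (List.ofFn r) q := by
  induction n generalizing p with
  | zero => simp [cnt]
  | succ n ih =>
    rw [Fin.card_filter_univ_succ', List.ofFn_succ, cnt, nb_zero, ← ih]
    simp only [nb_succ]

lemma card_eq_one {n : ℕ} (r : Fin n → ℕ) :
    (univ.filter fun i => r i = 1).card = (List.ofFn r).count 1 := by
  induction n with
  | zero => simp
  | succ n ih =>
    rw [Fin.card_filter_univ_succ', List.ofFn_succ, List.count_cons, ← ih, add_comm]
    simp

lemma dvd_all_left {p q g : ℕ} {l : List ℕ} (h : NbDvd p l q) (hp : g ∣ p) (hh : g ∣ hd l q) :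
    ∀ x ∈ l, g ∣ x := by
  induction l generalizing p with
  | nil => simp
  | cons x l ih =>
    simp only [hd_cons] at hh
    have := ih h.2 hh ((Nat.dvd_add_right hp).mp (hh.trans h.1))
    simpa using ⟨hh, this⟩

lemma dvd_all_right {p q g : ℕ} {l : List ℕ} (h : NbDvd p l q) (hq : g ∣ q) (hh : g ∣ lst p l) :
    ∀ x ∈ l, g ∣ x := by
  induction l using List.reverseRecOn generalizing q with
  | nil => simp
  | append_singleton l x ih =>
    rw [dvd_append] at h
    simp only [lst_append, lst, NbDvd, hd_nil, hd_cons, and_true] at h hh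
    have := ih h.1 hh ((Nat.dvd_add_left hq).mp (hh.trans h.2))
    intro y hy
    rcases List.mem_append.mp hy with hy | hy
    · exact this y hy
    · rw [List.mem_singleton.mp hy]; exact hh

lemma hd_seq_ne (t : BinaryTree Unit) (ht : t ≠ nil) : hd (seq 1 1 t) 1 ≠ 1 := by
  obtain ⟨c, hc, h⟩ := exists_hd_seq 1 1 t
  have : c ≠ 0 := fun h0 => ht (h.mp h0)
  omega

lemma lst_seq_ne (t : BinaryTree Unit) (ht : t ≠ nil) : lst 1 (seq 1 1 t) ≠ 1 := by
  obtain ⟨c, hc, h⟩ := exists_lst_seq 1 1 t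
  have : c ≠ 0 := fun h0 => ht (h.mp h0)
  omega

/-- The `r`-vectors of arithmetical structures with `r(1) = 2` are exactly the label sequences of
binary trees placed between the end values `1` and `1`. Each end entry divides all entries, hence
is `1` by the gcd condition; `r(1) = 2` then says that all inner entries are at least `2`. -/
lemma ofFn_conditions {n : ℕ} (r : Fin (n + 2) → ℕ) :
    ((∀ i, 0 < r i) ∧ univ.gcd r = 1 ∧ (∀ i, r i ∣ nb 0 r 0 i) ∧
      (univ.filter fun i => r i = 1).card = 2) ↔
    ∃ t, numNodes t = n ∧ List.ofFn r = 1 :: seq 1 1 t ++ [1] := by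
  constructor
  · rintro ⟨hpos, hgcd, hdvd, hone⟩
    rw [forall_dvd_nb] at hdvd
    rw [card_eq_one] at hone
    have hall : ∀ g, (∀ x ∈ List.ofFn r, g ∣ x) → g = 1 := by
      intro g hg
      rw [← Nat.dvd_one, ← hgcd]
      exact Finset.dvd_gcd fun i _ => hg _ (List.mem_ofFn.mpr ⟨i, rfl⟩)
    have hlen : (List.ofFn r).length = n + 2 := by simp
    have hpos' : ∀ x ∈ List.ofFn r, 0 < x := by
      intro x hx
      obtain ⟨i, rfl⟩ := List.mem_ofFn.mp hx
      exact hpos i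
    generalize List.ofFn r = L at *
    obtain ⟨x, l, y, rfl⟩ : ∃ x l y, L = x :: (l ++ [y]) := by
      rcases L with _ | ⟨x, L⟩
      · simp at hlen
      · rcases List.eq_nil_or_concat L with rfl | ⟨l, y, rfl⟩
        · simp at hlen
        · exact ⟨x, l, y, by simp⟩
    have hx : x = 1 := hall x (dvd_all_left hdvd (dvd_zero _) (by simp))
    have hy : y = 1 := hall y (dvd_all_right hdvd (dvd_zero _) (by simp [lst, lst_append]))
    subst hx hy
    simp only [NbDvd, dvd_append, hd_nil, hd_cons] at hdvd
    simp at hone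
    obtain ⟨t, ht⟩ := exists_seq_eq l (by
      intro z hz
      have h0 := hpos' z (by simp [hz])
      have h1 : z ≠ 1 := by rintro rfl; exact List.count_eq_zero.mp hone hz
      omega) hdvd.2.1
    refine ⟨t, ?_, by simp [ht]⟩
    rw [← length_seq 1 1, ht]
    simpa using hlen
  · rintro ⟨t, ht, hr⟩
    have hpos : ∀ i, 0 < r i := by
      intro i
      have : r i ∈ List.ofFn r := List.mem_ofFn.mpr ⟨i, rfl⟩
      rw [hr] at this
      simp only [List.cons_append, List.mem_cons, List.mem_append, List.not_mem_nil, or_false]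
        at this
      rcases this with h | h | h
      · omega
      · have := le_of_mem_seq h; omega
      · omega
    refine ⟨hpos, ?_, ?_, ?_⟩
    · have h0 : r 0 = 1 := by
        rw [List.ofFn_succ] at hr
        exact (List.cons.inj hr).1
      rw [← Nat.dvd_one, ← h0]
      exact Finset.gcd_dvd (mem_univ _)
    · rw [forall_dvd_nb, hr]
      simp [NbDvd, dvd_append, hd_nil, hd_cons, dvd_seq]
    · rw [card_eq_one, hr]
      simp only [List.cons_append, List.count_cons, List.count_append]
      have : List.count 1 (seq 1 1 t) = 0 :=
        List.count_eq_zero.mpr fun h => by have := le_of_mem_seq h; omega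
      simp [this]

/-- The two end entries are not equal to their neighbour sums, as the tree is nonempty. -/
lemma cnt_full (t : BinaryTree Unit) (ht : t ≠ nil) :
    cnt 0 (1 :: seq 1 1 t ++ [1]) 0 = leafNodes t := by
  have h1 := hd_seq_ne t ht
  have h2 := lst_seq_ne t ht
  simp [cnt, cnt_append, hd_append, cnt_seq, h1.symm, h2.symm]

end ArithPath

/-- For `n ≥ 1` and `k ≥ 1` with `2k ≤ n + 1`, the number of arithmetical structures
`(d, r)` on `P_{n+2}` with `r(1) = 2` and `d(1) = k` is
`C(n-1, 2k-2) · 2^{n+1-2k} · C_{k-1}` (Catalan number). -/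
theorem arith_path_count_r1_two_d1 (n k : ℕ) (hn : 1 ≤ n) (hk : 1 ≤ k)
    (h2k : 2 * k ≤ n + 1) :
    Nat.card {p : (Fin (n + 2) → ℕ) × (Fin (n + 2) → ℕ) //
      IsArithPath (n + 2) p.1 p.2 ∧
      (Finset.univ.filter fun i => p.2 i = 1).card = 2 ∧
      (Finset.univ.filter fun i => p.1 i = 1).card = k} =
    (n - 1).choose (2 * k - 2) * 2 ^ (n + 1 - 2 * k) * catalan (k - 1) := by
  open ArithPath in
  rw [← card_trees_eq n k hk h2k]
  have hcnt : ∀ d r : Fin (n + 2) → ℕ, (∀ i, 0 < r i) → (∀ i, d i * r i = nb 0 r 0 i) →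
      (Finset.univ.filter fun i => d i = 1).card = cnt 0 (List.ofFn r) 0 := by
    intro d r hr h
    rw [← card_eq_nb]
    congr 1
    ext i
    simp only [Finset.mem_filter, Finset.mem_univ, true_and, ← h]
    constructor
    · intro h; simp [h]
    · intro h; exact (Nat.eq_of_mul_eq_mul_right (hr i) (by omega : 1 * r i = d i * r i)).symm
  have hnil : ∀ t : BinaryTree Unit, t.numNodes = n → t ≠ .nil := by
    rintro t h rfl
    simp at h
    omega
  -- Both sides count the same set of lists: the `r`-vectors and the labelled trees.
  set Φ : {p : (Fin (n + 2) → ℕ) × (Fin (n + 2) → ℕ) // IsArithPath (n + 2) p.1 p.2 ∧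
      (Finset.univ.filter fun i => p.2 i = 1).card = 2 ∧
      (Finset.univ.filter fun i => p.1 i = 1).card = k} → List ℕ :=
    fun p => List.ofFn p.1.2 with hΦ
  have hinj : Function.Injective Φ := by
    rintro ⟨⟨d, r⟩, ⟨_, hr, _, h⟩, _⟩ ⟨⟨d', r'⟩, ⟨_, _, _, h'⟩, _⟩ he
    obtain rfl : r = r' := List.ofFn_injective he
    obtain rfl : d = d' := by
      funext i
      exact Nat.eq_of_mul_eq_mul_right (hr i) ((h i).trans (h' i).symm)
    rfl
  have hinj' : Function.Injective fun t => 1 :: seq 1 1 t ++ [1] := by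
    intro t t' h
    exact seq_injective one_pos one_pos (by simpa using h)
  rw [← Nat.card_range_of_injective hinj, ← Set.ncard_coe_finset,
    ← Set.ncard_image_of_injective _ hinj', Nat.card_coe_set_eq]
  congr 1
  ext L
  simp only [Set.mem_range, Set.mem_image, Finset.coe_filter, Set.mem_ofPred_eq,
    BinaryTree.mem_treesOfNumNodesEq]
  constructor
  · rintro ⟨⟨⟨d, r⟩, ⟨hd, hr, hg, h⟩, h1, h2⟩, rfl⟩
    obtain ⟨t, ht, he⟩ := (ofFn_conditions r).mp
      ⟨hr, hg, fun i => ⟨d i, (h i).symm.trans (mul_comm _ _)⟩, h1⟩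
    refine ⟨t, ⟨ht, ?_⟩, he.symm⟩
    rw [← cnt_full t (hnil t ht), ← he, ← hcnt d r hr h]
    exact h2
  · rintro ⟨t, ⟨ht, hl⟩, rfl⟩
    obtain ⟨r, he⟩ : ∃ r : Fin (n + 2) → ℕ, List.ofFn r = 1 :: seq 1 1 t ++ [1] := by
      have hlen : (1 :: seq 1 1 t ++ [1]).length = n + 2 := by simp [length_seq, ht]
      generalize 1 :: seq 1 1 t ++ [1] = L at hlen
      rw [← hlen]
      exact ⟨L.get, List.ofFn_get L⟩
    obtain ⟨hr, hg, hdv, h1⟩ := (ofFn_conditions r).mpr ⟨t, ht, he⟩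
    choose d hd using hdv
    have hd' : ∀ i, d i * r i = nb 0 r 0 i := fun i => by rw [hd i, mul_comm]
    have hdpos : ∀ i, 0 < d i := by
      intro i
      refine Nat.pos_of_ne_zero fun h0 => ?_
      have h := hd i
      rw [h0, mul_zero, nb] at h
      -- A path with at least two vertices has no isolated vertex.
      split_ifs at h with ha hb hb
      · have := hr ⟨i.val - 1, by omega⟩; omega
      · have := hr ⟨i.val - 1, by omega⟩; omega
      · have := hr ⟨i.val + 1, hb⟩; omega
      · omega
    refine ⟨⟨(d, r), ⟨hdpos, hr, hg, hd'⟩, h1, ?_⟩, he⟩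
    rw [hcnt d r hr hd', he, cnt_full t (hnil t ht), hl]
end

section
/- Let n ≥ 3. There is exactly one arithmetical structure (d, r) on the cycle C_n such that d_i ≥ 2 for all i, namely d = (2, 2, …, 2) and r = (1, 1, …, 1). -/
/-! A maximum-principle argument. At an index `i` where `r` attains its maximum `M`, the equation
`d i * M = r (i + 1) + r (i - 1)` with `d i ≥ 2` forces both neighbours to equal `M`. Walking around
the cycle, `r` is constant; the gcd condition makes the constant `1`, and then `d i = 1 + 1`. -/

def IsArithCycle (n : ℕ) (d r : Fin n → ℕ) : Prop :=
  (∀ i, 0 < d i) ∧ (∀ i, 0 < r i) ∧ Finset.univ.gcd r = 1 ∧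
  ∀ i : Fin n, d i * r i =
    r ⟨(i.val + 1) % n, Nat.mod_lt _ i.pos⟩ + r ⟨(i.val + n - 1) % n, Nat.mod_lt _ i.pos⟩

/-- For `n ≥ 3`: `(d, r)` is an arithmetical structure on the cycle `C_n` with
`d_i ≥ 2` for all `i` if and only if `d = (2, …, 2)` and `r = (1, …, 1)`.
In particular there is exactly one such structure. -/
theorem arith_cycle_laplacian_unique (n : ℕ) (hn : 3 ≤ n) (d r : Fin n → ℕ) :
    (IsArithCycle n d r ∧ ∀ i, 2 ≤ d i) ↔ ((∀ i, d i = 2) ∧ (∀ i, r i = 1)) := by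
  have hpos : 0 < n := by omega
  have : Nonempty (Fin n) := ⟨⟨0, hpos⟩⟩
  constructor
  · rintro ⟨⟨-, -, hgcd, heq⟩, hd⟩
    obtain ⟨m, hm⟩ := Finite.exists_max r
    have hwalk : ∀ k : ℕ, r ⟨(m.val + k) % n, Nat.mod_lt _ hpos⟩ = r m := by
      intro k
      induction k with
      | zero => simp [Nat.mod_eq_of_lt m.isLt]
      | succ k ih =>
        have h := heq ⟨(m.val + k) % n, Nat.mod_lt _ hpos⟩
        have h2 := Nat.mul_le_mul_right (r m) (hd ⟨(m.val + k) % n, Nat.mod_lt _ hpos⟩)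
        rw [ih] at h
        simp only [Nat.mod_add_mod] at h
        have h3 := hm ⟨(m.val + k + 1) % n, Nat.mod_lt _ hpos⟩
        have h4 := hm ⟨((m.val + k) % n + n - 1) % n, Nat.mod_lt _ hpos⟩
        simp only [← Nat.add_assoc]
        omega
    have hconst : ∀ i, r i = r m := by
      intro i
      -- the walk from `m` reaches `i` after `i + n - m` steps
      rw [← hwalk (i.val + n - m.val)]
      congr 1
      ext
      have : m.val + (i.val + n - m.val) = i.val + n := by omega
      simp [this, Nat.mod_eq_of_lt i.isLt]
    have hone : r m = 1 := by
      have hdvd : r m ∣ Finset.univ.gcd r := Finset.dvd_gcd fun i _ => by rw [hconst i]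
      rw [hgcd] at hdvd
      exact Nat.dvd_one.mp hdvd
    have hr : ∀ i, r i = 1 := fun i => (hconst i).trans hone
    exact ⟨fun i => by simpa [hr] using heq i, hr⟩
  · rintro ⟨hd, hr⟩
    refine ⟨⟨fun i => by simp [hd], fun i => by simp [hr], ?_, fun i => by simp [hd, hr]⟩,
      fun i => (hd i).ge⟩
    have hdvd : Finset.univ.gcd r ∣ r ⟨0, hpos⟩ := Finset.gcd_dvd (Finset.mem_univ _)
    rw [hr] at hdvd
    exact Nat.dvd_one.mp hdvd
end

section
/- Let n ≥ 3 and let (d, r) be an arithmetical structure on the cycle C_n. Then r(1) = 3n − (d_1 + ⋯ + d_n), and the cokernel ℤ^n / L(ℤ^n) of the matrix L = diag(d) − A (where A is the adjacency matrix of C_n, i.e., A_{ij} = 1 if i − j ≡ ±1 mod n and A_{ij} = 0 otherwise) is isomorphic to ℤ ⊕ ℤ/r(1)ℤ; in particular the critical group K(C_n, d, r) is cyclic of order r(1). -/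
/-- The adjacency matrix of the cycle `C_n`: `A i j = 1` iff `i - j ≡ ±1 (mod n)`. -/
def cycleAdj (n : ℕ) : Matrix (Fin n) (Fin n) ℤ :=
  Matrix.of fun i j => if (i.val + 1) % n = j.val ∨ (j.val + 1) % n = i.val then 1 else 0

/-! ### Contracting a chain at its maximum -/

/-- The effect on a sum over edges of deleting the vertex `q + 1` of a chain. -/
lemma sum_delete (f : ℕ → ℕ → ℚ) (a b : ℕ → ℕ) (q : ℕ)
    (hb : ∀ i, b i = if i ≤ q then a i else a (i + 1)) (k : ℕ) :
    ∑ i ∈ Finset.range (q + 2 + k), f (a i) (a (i + 1)) =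
      ∑ i ∈ Finset.range (q + 1 + k), f (b i) (b (i + 1)) +
        (f (a q) (a (q + 1)) + f (a (q + 1)) (a (q + 2)) - f (a q) (a (q + 2))) := by
  induction k with
  | zero =>
    have h1 : ∑ i ∈ Finset.range q, f (b i) (b (i + 1)) =
        ∑ i ∈ Finset.range q, f (a i) (a (i + 1)) := by
      refine Finset.sum_congr rfl fun i hi => ?_
      have hi := Finset.mem_range.1 hi
      rw [hb, hb, if_pos (by omega), if_pos (by omega)]
    simp only [add_zero, Finset.sum_range_succ, h1]
    rw [hb q, hb (q + 1), if_pos le_rfl, if_neg (by omega)]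
    ring
  | succ k ih =>
    rw [← add_assoc, ← add_assoc, Finset.sum_range_succ, Finset.sum_range_succ, ih,
      hb (q + 1 + k), hb (q + 1 + k + 1), if_neg (by omega), if_neg (by omega),
      show q + 1 + k + 1 = q + 2 + k by ring]
    ring

/-- Repeated deletion of a maximal interior vertex reduces a chain whose ends carry its minimum to
a constant chain; quantities invariant under deletion vanish if they do so on the edge `1, 1`. -/
lemma chain_contract (m : ℕ) : ∀ a : ℕ → ℕ, (∀ i, 0 < a i) → a (m + 1) = a 0 →
    (∀ i ≤ m + 1, a 0 ≤ a i) → (∀ i ≤ m, Nat.Coprime (a i) (a (i + 1))) →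
    (∀ i < m, a (i + 1) ∣ a i + a (i + 2)) →
    a 0 = 1 ∧ ∀ f : ℕ → ℕ → ℚ, f 1 1 = 0 →
      (∀ x z, 0 < x → 0 < z → f x (x + z) + f (x + z) z = f x z) →
      ∑ i ∈ Finset.range (m + 1), f (a i) (a (i + 1)) = 0 := by
  induction m with
  | zero =>
    intro a hpos hper _ hco _
    have h := hco 0 le_rfl
    simp only [zero_add] at h hper
    rw [hper, Nat.coprime_self] at h
    refine ⟨h, fun f hf _ => ?_⟩
    simp [hper, h, hf]
  | succ m ih =>
    intro a hpos hper hmin hco hdvd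
    by_cases hconst : ∀ i ≤ m + 2, a i = a 0
    · have h := hco 0 (by omega)
      rw [hconst (0 + 1) (by omega), Nat.coprime_self] at h
      refine ⟨h, fun f hf _ => Finset.sum_eq_zero fun i hi => ?_⟩
      have hi := Finset.mem_range.1 hi
      rw [hconst i (by omega), hconst (i + 1) (by omega), h, hf]
    · push Not at hconst
      obtain ⟨i₁, hi₁, hne⟩ := hconst
      obtain ⟨p, hp, hmax⟩ := Finset.exists_max_image (Finset.range (m + 3)) a ⟨0, by simp⟩
      have hp := Finset.mem_range.1 hp
      have hmax' : ∀ i ≤ m + 2, a i ≤ a p := fun i hi =>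
        hmax i (Finset.mem_range.2 (by omega))
      have hlt : a 0 < a p := lt_of_lt_of_le (lt_of_le_of_ne (hmin i₁ hi₁) hne.symm) (hmax' i₁ hi₁)
      have hp0 : p ≠ 0 := by rintro rfl; omega
      have hpm : p ≠ m + 2 := by
        rintro rfl
        exact hlt.ne' hper
      obtain ⟨q, rfl⟩ := Nat.exists_eq_succ_of_ne_zero hp0
      simp only [Nat.succ_eq_add_one] at *
      have h0 := hpos 0
      have c1 := hco q (by omega)
      have c2 : Nat.Coprime (a (q + 1)) (a (q + 2)) := hco (q + 1) (by omega)
      have l1 : a q < a (q + 1) := by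
        refine lt_of_le_of_ne (hmax' q (by omega)) fun h => ?_
        rw [h, Nat.coprime_self] at c1
        omega
      have l2 : a (q + 2) < a (q + 1) := by
        refine lt_of_le_of_ne (hmax' (q + 2) (by omega)) fun h => ?_
        rw [h, Nat.coprime_self] at c2
        omega
      have hsum : a (q + 1) = a q + a (q + 2) := by
        obtain ⟨t, ht⟩ := hdvd q (by omega)
        have := hpos q
        have ht1 : t = 1 := by
          have : t < 2 := by
            by_contra hc
            have : a (q + 1) * 2 ≤ a (q + 1) * t := Nat.mul_le_mul_left _ (by omega)
            omega
          rcases t with _ | _ | t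
          · omega
          · rfl
          · omega
        rw [ht, ht1, mul_one]
      have c3 : Nat.Coprime (a q) (a (q + 2)) := by
        rw [hsum] at c1
        simpa using c1
      obtain ⟨b, hb⟩ : ∃ b : ℕ → ℕ, ∀ i, b i = if i ≤ q then a i else a (i + 1) := ⟨_, fun _ => rfl⟩
      have hb0 : b 0 = a 0 := by rw [hb, if_pos (by omega)]
      have key := ih b
        (fun i => by rw [hb]; split_ifs <;> exact hpos _)
        (by rw [hb0, hb, if_neg (by omega)]; exact hper)
        (fun i hi => by
          rw [hb0, hb]
          split_ifs
          · exact hmin _ (by omega)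
          · exact hmin _ (by omega))
        (fun i hi => by
          rw [hb, hb]
          rcases lt_trichotomy i q with h | rfl | h
          · rw [if_pos (by omega), if_pos (by omega)]; exact hco i (by omega)
          · rw [if_pos (by omega), if_neg (by omega)]; exact c3
          · rw [if_neg (by omega), if_neg (by omega)]; exact hco (i + 1) (by omega))
        (fun i hi => by
          rw [hb, hb, hb]
          by_cases h1 : i + 2 ≤ q
          · rw [if_pos (by omega), if_pos (by omega), if_pos (by omega)]; exact hdvd i (by omega)
          · by_cases h2 : i + 1 = q
            · subst h2
              rw [if_pos (by omega), if_pos (by omega), if_neg (by omega)]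
              have h := hdvd i (by omega)
              have h' : a (i + 2) = a (i + 1) + a (i + 3) := hsum
              rw [h', show a i + (a (i + 1) + a (i + 3)) = a (i + 1) + (a i + a (i + 3)) by ring]
                at h
              exact (Nat.dvd_add_right (dvd_refl _)).1 h
            · by_cases h3 : i = q
              · subst h3
                rw [if_pos le_rfl, if_neg (by omega), if_neg (by omega)]
                change a (i + 2) ∣ a i + a (i + 3)
                have h : a (i + 2) ∣ a (i + 1) + a (i + 3) := hdvd (i + 1) (by omega)
                rw [hsum, show a i + a (i + 2) + a (i + 3) = a (i + 2) + (a i + a (i + 3)) by ring]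
                  at h
                exact (Nat.dvd_add_right (dvd_refl _)).1 h
              · rw [if_neg (by omega), if_neg (by omega), if_neg (by omega)]
                exact hdvd (i + 1) (by omega))
      refine ⟨hb0 ▸ key.1, fun f hf hadd => ?_⟩
      obtain ⟨k, hk⟩ : ∃ k, m = q + k := ⟨m - q, by omega⟩
      have hdel := sum_delete f a b q hb k
      have hz := key.2 f hf hadd
      rw [show q + 1 + k = m + 1 by omega, hz, show q + 2 + k = m + 1 + 1 by omega] at hdel
      have := hadd (a q) (a (q + 2)) (hpos _) (hpos _)
      rw [← hsum] at this
      rw [hdel]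
      linarith

/-! ### The cokernel -/

/-- The second solution of the recurrence `S j + S (j+2) = D (j+1) * S (j+1)`, normalised by
`S 0 = 0` and `S 1 = 1`. -/
def secondSol (D : ℕ → ℤ) : ℕ → ℤ
  | 0 => 0
  | 1 => 1
  | j + 2 => D (j + 1) * secondSol D (j + 1) - secondSol D j

lemma casoratian (D R : ℕ → ℤ) (hR0 : R 0 = 1) (hR : ∀ j, D (j + 1) * R (j + 1) = R j + R (j + 2))
    (j : ℕ) : R j * secondSol D (j + 1) - R (j + 1) * secondSol D j = 1 := by
  induction j with
  | zero => simp [secondSol, hR0]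
  | succ j ih =>
    simp only [secondSol]
    linear_combination ih + secondSol D (j + 1) * hR j

lemma secondSol_eq_sum (D R : ℕ → ℤ) (hR0 : R 0 = 1) (hpos : ∀ j, 0 < R j)
    (hR : ∀ j, D (j + 1) * R (j + 1) = R j + R (j + 2)) (m : ℕ) :
    (secondSol D m : ℚ) = R m * ∑ j ∈ Finset.range m, 1 / ((R j : ℚ) * R (j + 1)) := by
  induction m with
  | zero => simp [secondSol]
  | succ m ih =>
    have h : (R m : ℚ) * secondSol D (m + 1) - R (m + 1) * secondSol D m = 1 := by
      exact_mod_cast casoratian D R hR0 hR m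
    have h1 : (R m : ℚ) ≠ 0 := by exact_mod_cast (hpos m).ne'
    have h2 : (R (m + 1) : ℚ) ≠ 0 := by exact_mod_cast (hpos (m + 1)).ne'
    rw [Finset.sum_range_succ, mul_add]
    rw [ih] at h
    field_simp
    field_simp at h
    linear_combination h

/-- Modulo `S n`, the second solution inherits the period `n` of the coefficients; the value at
`n + 1` comes from the Casoratian at `n`. -/
lemma secondSol_periodic (D R : ℕ → ℤ) (n c : ℕ) (hR0 : R 0 = 1) (hRn : R n = 1)
    (hR : ∀ j, D (j + 1) * R (j + 1) = R j + R (j + 2)) (hD : ∀ j, D (j + n) = D j)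
    (hS : secondSol D n = c) (j : ℕ) :
    (secondSol D (j + n) : ZMod c) = secondSol D j := by
  induction j using Nat.twoStepInduction with
  | zero => simp [secondSol, hS]
  | one =>
    have h := casoratian D R hR0 hR n
    rw [hRn, hS] at h
    have h' : secondSol D (1 + n) = 1 + R (n + 1) * c := by
      rw [add_comm]; linear_combination h
    rw [h']
    simp [secondSol]
  | more j h1 h2 =>
    have e : j + 2 + n = (j + n) + 2 := by ring
    have e1 : j + n + 1 = j + 1 + n := by ring
    rw [e]
    simp only [secondSol]
    rw [e1, hD]
    push_cast
    rw [h1, h2]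

/-- The cokernel of a cyclic three-term recurrence operator: `idx` unrolls the cycle, with
section `τ`, and `hL` says that `L` acts on basis vectors by the recurrence. -/
lemma coker_equiv {n : ℕ} (c : ℕ) (L : (Fin n → ℤ) →ₗ[ℤ] (Fin n → ℤ)) (idx : ℕ → Fin n)
    (τ : Fin n → ℕ) (hτ : ∀ i, idx (τ i) = i) (hidx : ∀ j, idx (j + n) = idx j) (hn : 0 < n)
    (D R S : ℕ → ℤ) (hR : ∀ j, D (j + 1) * R (j + 1) = R j + R (j + 2))
    (hSrec : ∀ j, D (j + 1) * S (j + 1) = S j + S (j + 2))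
    (hS0 : S 0 = 0) (hS1 : S 1 = 1) (hR0 : R 0 = 1) (hRn : R n = 1) (hSn : S n = c)
    (hRτ : ∀ j, R (τ (idx j)) = R j) (hSτ : ∀ j, (S (τ (idx j)) : ZMod c) = S j)
    (hL : ∀ j, L (Pi.single (idx (j + 1)) 1) = D (j + 1) • (Pi.single (idx (j + 1)) 1 : Fin n → ℤ)
      - Pi.single (idx j) 1 - Pi.single (idx (j + 2)) 1) :
    Nonempty (((Fin n → ℤ) ⧸ LinearMap.range L) ≃ₗ[ℤ] ℤ × ZMod c) := by
  set E : ℕ → (Fin n → ℤ) := fun j => Pi.single (idx j) 1 with hE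
  have hEn : E n = E 0 := by
    have := hidx 0
    rw [zero_add] at this
    simp only [hE, this]
  have hLE : ∀ j, L (E (j + 1)) = D (j + 1) • E (j + 1) - E j - E (j + 2) := hL
  let φ : (Fin n → ℤ) →ₗ[ℤ] ℤ × ZMod c :=
    Fintype.linearCombination ℤ (fun i => (R (τ i), (S (τ i) : ZMod c)))
  have hφE : ∀ j, φ (E j) = (R j, (S j : ZMod c)) := by
    intro j
    simp only [φ, hE, Fintype.linearCombination_apply_single, one_smul, hRτ, hSτ]
  have hsurj : Function.Surjective φ := by
    rintro ⟨x, y⟩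
    obtain ⟨y, rfl⟩ := ZMod.intCast_surjective y
    refine ⟨x • E 0 + y • (E 1 - R 1 • E 0), ?_⟩
    rw [map_add, map_smul, map_smul, map_sub, map_smul, hφE, hφE, hR0, hS0, hS1]
    ext
    · simp only [Prod.fst_add, Prod.smul_fst, Prod.fst_sub, smul_eq_mul]
      ring
    · simp only [Prod.snd_add, Prod.smul_snd, Prod.snd_sub]
      simp
  have hle : LinearMap.range L ≤ LinearMap.ker φ := by
    rw [LinearMap.range_le_ker_iff]
    refine LinearMap.pi_ext' fun i => LinearMap.ext_ring ?_
    obtain ⟨j, hj⟩ : ∃ j, idx (j + 1) = i := by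
      refine ⟨τ i + n - 1, ?_⟩
      rw [show τ i + n - 1 + 1 = τ i + n by omega, hidx, hτ]
    have hz : φ (L (E (j + 1))) = 0 := by
      rw [hLE, map_sub, map_sub, map_smul, hφE, hφE, hφE]
      have h2 : (D (j + 1) : ZMod c) * S (j + 1) = S j + S (j + 2) := by
        exact_mod_cast congrArg (Int.cast : ℤ → ZMod c) (hSrec j)
      ext
      · simp only [Prod.fst_sub, Prod.smul_fst, smul_eq_mul, Prod.fst_zero]
        linear_combination hR j
      · simp only [Prod.snd_sub, Prod.smul_snd, Prod.snd_zero]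
        rw [zsmul_eq_mul]
        linear_combination h2
    simpa [hE, hj] using hz
  have hE_mem : ∀ j, E j - R j • E 0 - S j • (E 1 - R 1 • E 0) ∈ LinearMap.range L := by
    intro j
    induction j using Nat.twoStepInduction with
    | zero => simp [hR0, hS0]
    | one => simp [hS1]
    | more j h1 h2 =>
      have h := Submodule.sub_mem _ (Submodule.sub_mem _
        (Submodule.smul_mem _ (D (j + 1)) h2) h1) (LinearMap.mem_range_self L (E (j + 1)))
      convert h using 1
      have e1 : R (j + 2) = D (j + 1) * R (j + 1) - R j := by linear_combination -hR j
      have e2 : S (j + 2) = D (j + 1) * S (j + 1) - S j := by linear_combination -hSrec j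
      rw [hLE, e1, e2]
      module
  have hc : (c : ℤ) • (E 1 - R 1 • E 0) ∈ LinearMap.range L := by
    have h := hE_mem n
    rw [hEn, hRn, hSn, one_smul, sub_self, zero_sub] at h
    simpa only [neg_neg] using Submodule.neg_mem _ h
  have hge : LinearMap.ker φ ≤ LinearMap.range L := by
    intro x hx
    have hx' : φ x = 0 := hx
    simp only [φ, Fintype.linearCombination_apply] at hx'
    have hx1 : ∑ i, x i * R (τ i) = 0 := by
      have := congrArg Prod.fst hx'
      simpa [Prod.fst_sum] using this
    have hx2 : (c : ℤ) ∣ ∑ i, x i * S (τ i) := by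
      rw [← ZMod.intCast_zmod_eq_zero_iff_dvd]
      have := congrArg Prod.snd hx'
      simpa [Prod.snd_sum] using this
    have h : ∑ i, x i • (E (τ i) - R (τ i) • E 0 - S (τ i) • (E 1 - R 1 • E 0)) ∈
        LinearMap.range L :=
      Submodule.sum_mem _ fun i _ => Submodule.smul_mem _ _ (hE_mem _)
    have hxE : ∑ i, x i • E (τ i) = x := by
      simp only [hE, hτ]
      exact (pi_eq_sum_univ' x).symm
    have hexp : ∑ i, x i • (E (τ i) - R (τ i) • E 0 - S (τ i) • (E 1 - R 1 • E 0)) =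
        x - (∑ i, x i * R (τ i)) • E 0 - (∑ i, x i * S (τ i)) • (E 1 - R 1 • E 0) := by
      rw [Finset.sum_smul, Finset.sum_smul]
      nth_rw 2 [← hxE]
      rw [← Finset.sum_sub_distrib, ← Finset.sum_sub_distrib]
      refine Finset.sum_congr rfl fun i _ => ?_
      module
    obtain ⟨t, ht⟩ := hx2
    rw [hexp, hx1, zero_smul, sub_zero, ht, mul_comm, mul_smul] at h
    have := Submodule.add_mem _ h (Submodule.smul_mem _ t hc)
    rwa [sub_add_cancel] at this
  exact ⟨(Submodule.quotEquivOfEq _ _ (le_antisymm hle hge)).trans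
    (φ.quotKerEquivOfSurjective hsurj)⟩

/-! ### Unrolling the cycle -/

/-- For any arithmetical structure `(d, r)` on the cycle `C_n` (`n ≥ 3`):
`r(1) = 3n - (d_1 + ⋯ + d_n)`, and the cokernel of `L = diag(d) - A : ℤ^n → ℤ^n`
is isomorphic to `ℤ ⊕ ℤ/r(1)ℤ`; in particular the critical group is cyclic of
order `r(1)`. -/
theorem arith_cycle_critical_group (n : ℕ) (hn : 3 ≤ n) (d r : Fin n → ℕ)
    (h : IsArithCycle n d r) :
    ((Finset.univ.filter fun i => r i = 1).card : ℤ) = 3 * n - ∑ i, (d i : ℤ) ∧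
    Nonempty (((Fin n → ℤ) ⧸ LinearMap.range
        (Matrix.mulVecLin (Matrix.diagonal (fun i => (d i : ℤ)) - cycleAdj n))) ≃ₗ[ℤ]
      ℤ × ZMod ((Finset.univ.filter fun i => r i = 1).card)) := by
  obtain ⟨hd, hr, hgcd, hrec⟩ := h
  have hn0 : 0 < n := by omega
  obtain ⟨i₀, -, hi₀⟩ := Finset.exists_min_image (Finset.univ : Finset (Fin n)) r
    ⟨⟨0, hn0⟩, Finset.mem_univ _⟩
  obtain ⟨idx, hidx⟩ : ∃ idx : ℕ → Fin n, ∀ j, idx j = ⟨(i₀ + j) % n, Nat.mod_lt _ hn0⟩ :=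
    ⟨_, fun _ => rfl⟩
  have hper : ∀ j, idx (j + n) = idx j := by
    intro j
    rw [hidx, hidx, Fin.mk.injEq, ← add_assoc, Nat.add_mod_right]
  have hperm : ∀ j t, idx (j + n * t) = idx j := by
    intro j t
    rw [hidx, hidx, Fin.mk.injEq, ← add_assoc, Nat.add_mul_mod_self_left]
  obtain ⟨τ, hτd⟩ : ∃ τ : Fin n → ℕ, ∀ i, τ i = i + n - i₀ := ⟨_, fun _ => rfl⟩
  have hτ : ∀ i, idx (τ i) = i := by
    intro i
    rw [hidx, hτd, Fin.ext_iff]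
    change (i₀ + (i + n - i₀ : ℕ)) % n = i
    rw [show (i₀ + (i + n - i₀ : ℕ) : ℕ) = i + n by omega, Nat.add_mod_right,
      Nat.mod_eq_of_lt i.2]
  have hidx0 : idx 0 = i₀ := by
    rw [hidx, Fin.ext_iff]
    simp [Nat.mod_eq_of_lt i₀.2]
  have hbij : Function.Bijective (fun j : Fin n => idx j) := by
    rw [← Finite.injective_iff_bijective]
    intro j k hjk
    simp only [hidx, Fin.mk.injEq] at hjk
    have : (j : ℕ) ≡ k [MOD n] := Nat.ModEq.add_left_cancel' _ hjk
    exact Fin.ext (Nat.ModEq.eq_of_lt_of_lt this j.2 k.2)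
  -- `τ (idx j)` and `j` differ by a multiple of the period.
  have hτidx : ∀ {α : Type} (g : ℕ → α), (∀ j, g (j + n) = g j) → ∀ j, g (τ (idx j)) = g j := by
    intro α g hg j
    have hg' : Function.Periodic g n := hg
    rw [← hg'.map_mod_nat, ← hg'.map_mod_nat j]
    congr 1
    have : i₀ + τ (idx j) ≡ i₀ + j [MOD n] := by
      have := hτ (idx j)
      rw [hidx, hidx j, Fin.mk.injEq] at this
      rw [hidx j]
      exact this
    exact Nat.ModEq.add_left_cancel' _ this
  -- Neighbours of a vertex, in unrolled coordinates.
  have hnext : ∀ j, (⟨((idx j).val + 1) % n, Nat.mod_lt _ hn0⟩ : Fin n) = idx (j + 1) := by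
    intro j
    rw [hidx, hidx, Fin.mk.injEq]
    change ((i₀ + j) % n + 1) % n = (i₀ + (j + 1)) % n
    rw [Nat.mod_add_mod]; rfl
  have hprev : ∀ j, (⟨((idx (j + 1)).val + n - 1) % n, Nat.mod_lt _ hn0⟩ : Fin n) = idx j := by
    intro j
    rw [hidx, hidx, Fin.mk.injEq]
    change ((i₀ + (j + 1)) % n + n - 1) % n = (i₀ + j) % n
    rw [Nat.add_sub_assoc hn0, Nat.mod_add_mod,
      show (i₀ + (j + 1) + (n - 1) : ℕ) = i₀ + j + n by omega, Nat.add_mod_right]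
  set R : ℕ → ℕ := fun j => r (idx j) with hRdef
  set D : ℕ → ℕ := fun j => d (idx j) with hDdef
  have hRrec : ∀ j, D (j + 1) * R (j + 1) = R j + R (j + 2) := by
    intro j
    have := hrec (idx (j + 1))
    rw [hnext, hprev] at this
    exact this.trans (add_comm _ _)
  have hRpos : ∀ j, 0 < R j := fun j => hr _
  have hRper : ∀ j, R (j + n) = R j := fun j => by simp only [hRdef, hper]
  have hDper : ∀ j, D (j + n) = D j := fun j => by simp only [hDdef, hper]
  have hRn : R n = R 0 := by simpa using hRper 0
  -- A common divisor of two consecutive terms divides all later terms, hence all of `r`.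
  have hcop : ∀ j, Nat.Coprime (R j) (R (j + 1)) := by
    intro j
    have hall : ∀ k, (R j).gcd (R (j + 1)) ∣ R (j + k) := by
      intro k
      induction k using Nat.twoStepInduction with
      | zero => exact Nat.gcd_dvd_left _ _
      | one => exact Nat.gcd_dvd_right _ _
      | more k h1 h2 =>
        have h3 := hRrec (j + k)
        refine (Nat.dvd_add_right h1).1 ?_
        rw [show R (j + k) + R (j + (k + 2)) = D (j + k + 1) * R (j + k + 1) from h3.symm]
        exact Dvd.dvd.mul_left h2 _
    have : (R j).gcd (R (j + 1)) ∣ 1 := by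
      refine (Finset.dvd_gcd fun i _ => ?_).trans (dvd_of_eq hgcd)
      have hj : j ≤ τ i + n * j := by nlinarith
      have := hall (τ i + n * j - j)
      rw [show j + (τ i + n * j - j) = τ i + n * j by omega] at this
      simpa only [hRdef, hperm, hτ] using this
    exact Nat.dvd_one.1 this
  obtain ⟨m, rfl⟩ : ∃ m, n = m + 1 := ⟨n - 1, by omega⟩
  obtain ⟨hR1, hsum⟩ := chain_contract m R hRpos hRn
    (fun i _ => by simp only [hRdef, hidx0]; exact hi₀ _ (Finset.mem_univ _))
    (fun i _ => hcop i) (fun i _ => ⟨D (i + 1), by rw [← hRrec, mul_comm]⟩)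
  set c := (Finset.univ.filter fun i => r i = 1).card with hc
  have hsumidx : ∀ g : Fin (m + 1) → ℚ, ∑ i, g i = ∑ j ∈ Finset.range (m + 1), g (idx j) := by
    intro g
    rw [← Fin.sum_univ_eq_sum_range (fun j => g (idx j))]
    exact (Fintype.sum_bijective _ hbij _ _ fun _ => rfl).symm
  have hshift : ∀ g : ℕ → ℚ, g (m + 1) = g 0 →
      ∑ j ∈ Finset.range (m + 1), g (j + 1) = ∑ j ∈ Finset.range (m + 1), g j := by
    intro g hg
    have h1 := Finset.sum_range_succ g (m + 1)
    have h2 := Finset.sum_range_succ' g (m + 1)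
    linarith
  have hRQ : ∀ j, (R j : ℚ) ≠ 0 := fun j => by exact_mod_cast (hRpos j).ne'
  have hcQ : (c : ℚ) = ∑ j ∈ Finset.range (m + 1), if R j = 1 then 1 else 0 := by
    rw [← hsumidx (fun i => if r i = 1 then 1 else 0), hc, Finset.card_filter]
    push_cast
    rfl
  have hW : ∑ j ∈ Finset.range (m + 1), 1 / ((R j : ℚ) * R (j + 1)) = c := by
    have := hsum (fun x y => 1 / ((x : ℚ) * y) - if x = 1 then 1 else 0) (by simp) (by
      intro x z hx hz
      have hx' : (x : ℚ) ≠ 0 := by exact_mod_cast hx.ne'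
      have hz' : (z : ℚ) ≠ 0 := by exact_mod_cast hz.ne'
      have hxz : (x : ℚ) + z ≠ 0 := by positivity
      rw [if_neg (by omega : ¬ x + z = 1)]
      push_cast
      split_ifs <;> field_simp <;> ring)
    rw [Finset.sum_sub_distrib, ← hcQ] at this
    linarith
  have hV : ∑ j ∈ Finset.range (m + 1), ((R j : ℚ) / R (j + 1) + R (j + 1) / R j) + c =
      3 * (m + 1 : ℕ) := by
    have := hsum (fun x y => (x : ℚ) / y + y / x + 1 / ((x : ℚ) * y) - 3) (by norm_num) (by
      intro x z hx hz
      have hx' : (x : ℚ) ≠ 0 := by exact_mod_cast hx.ne'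
      have hz' : (z : ℚ) ≠ 0 := by exact_mod_cast hz.ne'
      have hxz : (x : ℚ) + z ≠ 0 := by positivity
      push_cast
      field_simp
      ring)
    rw [Finset.sum_sub_distrib, Finset.sum_add_distrib, hW] at this
    simp only [Finset.sum_const, Finset.card_range, nsmul_eq_mul] at this
    linarith
  have hdsum : ∑ i, (d i : ℚ) =
      ∑ j ∈ Finset.range (m + 1), ((R j : ℚ) / R (j + 1) + R (j + 1) / R j) := by
    rw [hsumidx, ← hshift (fun j => (D j : ℚ)) 
        (by
          have := hDper 0
          simp only [zero_add] at this
          rw [this]),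
      Finset.sum_add_distrib,
      ← hshift (fun j => (R (j + 1) : ℚ) / R j)
        (by
          have h1 := hRper 1
          rw [add_comm] at h1
          rw [h1, hRn, zero_add]), ← Finset.sum_add_distrib]
    refine Finset.sum_congr rfl fun j _ => ?_
    have h1 : (D (j + 1) : ℚ) * R (j + 1) = R j + R (j + 2) := by exact_mod_cast hRrec j
    have := hRQ (j + 1)
    rw [← add_div, eq_div_iff this]
    exact h1
  constructor
  · have : (c : ℚ) = 3 * (m + 1 : ℕ) - ∑ i, (d i : ℚ) := by
      rw [hdsum]; linarith
    exact_mod_cast this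
  have hRrecZ : ∀ j, ((D (j + 1) : ℕ) : ℤ) * (R (j + 1) : ℕ) = (R j : ℕ) + (R (j + 2) : ℕ) :=
    fun j => by exact_mod_cast hRrec j
  have hSn : secondSol (fun j => (D j : ℤ)) (m + 1) = c := by
    have := secondSol_eq_sum (fun j => (D j : ℤ)) (fun j => (R j : ℤ)) (by simp [hR1])
      (fun j => by exact_mod_cast hRpos j) hRrecZ (m + 1)
    simp only [Int.cast_natCast] at this
    rw [hW, hRn, hR1] at this
    simp only [Nat.cast_one, one_mul] at this
    exact_mod_cast this
  refine coker_equiv c _ idx τ hτ hper hn0 (fun j => (D j : ℤ)) (fun j => (R j : ℤ))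
    (secondSol fun j => (D j : ℤ)) hRrecZ ?_ rfl rfl (by simp [hR1]) (by simp [hRn, hR1]) hSn ?_ ?_ ?_
  · intro j
    simp only [secondSol]
    ring
  · exact hτidx (fun j => (R j : ℤ)) (fun j => by simp only [hRper])
  · exact hτidx (fun j => ((secondSol (fun j => (D j : ℤ)) j : ℤ) : ZMod c))
      (secondSol_periodic _ (fun j => (R j : ℤ)) _ _ (by simp [hR1]) (by simp [hRn, hR1]) hRrecZ
        (fun j => by simp only [hDper]) hSn)
  · intro j
    ext k
    have hne : idx j ≠ idx (j + 2) := by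
      intro he
      rw [hidx, hidx, Fin.mk.injEq] at he
      have he' : 0 ≡ 2 [MOD m + 1] :=
        Nat.ModEq.add_left_cancel' (i₀ + j) he
      have := Nat.le_of_dvd (by omega) ((Nat.modEq_zero_iff_dvd).1 he'.symm)
      omega
    have h1 : ((k : ℕ) + 1) % (m + 1) = (idx (j + 1)).val ↔ k = idx j := by
      constructor
      · intro hk
        have hk' : idx (τ k + 1) = idx (j + 1) := by
          rw [← hnext, hτ]
          exact Fin.ext hk
        have h3 := hprev (τ k)
        rw [hτ] at h3
        rw [← h3, ← hprev j]
        simp only [hk']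
      · rintro rfl
        exact congrArg Fin.val (hnext j)
    have h2 : ((idx (j + 1)).val + 1) % (m + 1) = (k : ℕ) ↔ k = idx (j + 2) := by
      have h3 : ((idx (j + 1)).val + 1) % (m + 1) = (idx (j + 2)).val :=
        congrArg Fin.val (hnext (j + 1))
      rw [h3, Fin.ext_iff, eq_comm]
    have hA : cycleAdj (m + 1) k (idx (j + 1)) =
        (if k = idx j then 1 else 0) + if k = idx (j + 2) then 1 else 0 := by
      simp only [cycleAdj, Matrix.of_apply, h1, h2]
      by_cases e1 : k = idx j
      · subst e1
        simp [hne]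
      · simp [e1]
    rw [Matrix.mulVecLin_apply, Matrix.mulVec_single_one, Matrix.col_apply, Matrix.sub_apply, hA,
      Matrix.diagonal_apply]
    simp only [Pi.sub_apply, Pi.smul_apply, Pi.single_apply, smul_eq_mul, hDdef]
    by_cases e : k = idx (j + 1)
    · subst e
      simp only [if_true]
      ring
    · simp only [if_neg e]
      ring
end

section
/- Let n ≥ 3 and 1 ≤ k ≤ n. The number of arithmetical structures (d, r) on the cycle C_n with r(1) = k equals binomial(2n−k−1, n−k). Consequently, the total number of arithmetical structures on C_n equals binomial(2n−1, n−1). -/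
/-! ### Chains, and removing or inserting a leaf -/

/-- A cyclic sequence cut open at an entry `a` that is a minimum: the entries `r 0, …, r n` run from
`a` to `a`, none is smaller than `a`, and each interior entry divides the sum of its two neighbours.
Beyond index `n` the sequence is continued by the constant `a`, so that a chain is determined by its
values on `0, …, n`. An interior entry equal to the sum of its neighbours is called a *leaf*. -/
structure ArithChain (a n : ℕ) (r : ℕ → ℕ) : Prop where
  zero : r 0 = a
  le : ∀ i, a ≤ r i
  tail : ∀ i, n ≤ i → r i = a
  dvd : ∀ i, i + 1 < n → r (i + 1) ∣ r i + r (i + 2)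

/-- Delete the entry at index `q`. -/
def removeAt (q : ℕ) (r : ℕ → ℕ) : ℕ → ℕ := fun i => if i < q then r i else r (i + 1)

/-- Insert a leaf, i.e. the sum of the entries at `q - 1` and `q`, between these two entries. -/
def insertAt (q : ℕ) (r : ℕ → ℕ) : ℕ → ℕ :=
  fun i => if i < q then r i else if i = q then r (q - 1) + r q else r (i - 1)

/-- The leftmost occurrence of the maximum of a non-constant chain is a leaf. -/
theorem ArithChain.exists_leaf {a n : ℕ} {r : ℕ → ℕ} (ha : 0 < a) (h : ArithChain a n r)
    (hne : ∃ i, r i ≠ a) : ∃ p, p + 1 < n ∧ r (p + 1) = r p + r (p + 2) := by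
  obtain ⟨i₀, hi₀⟩ := hne
  have hi₀n : i₀ < n := by
    by_contra hc
    exact hi₀ (h.tail i₀ (by omega))
  obtain ⟨x, hx, hmax⟩ := Finset.exists_max_image (Finset.range n) r
    ⟨i₀, Finset.mem_range.2 hi₀n⟩
  have hM : a < r x := by
    have h1 := hmax i₀ (Finset.mem_range.2 hi₀n)
    have h2 := h.le i₀
    omega
  have hall : ∀ j, r j ≤ r x := by
    intro j
    by_cases hj : j < n
    · exact hmax j (Finset.mem_range.2 hj)
    · rw [h.tail j (by omega)]; exact hM.le
  classical
  have hex : ∃ j, r j = r x := ⟨x, rfl⟩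
  have hs := Nat.find_spec hex
  have hmin : ∀ m, m < Nat.find hex → r m ≠ r x := fun m hm => Nat.find_min hex hm
  generalize Nat.find hex = j at hs hmin
  obtain _ | p := j
  · have := h.zero
    omega
  have hpn : p + 1 < n := by
    by_contra hc
    have := h.tail (p + 1) (by omega)
    omega
  refine ⟨p, hpn, ?_⟩
  have h1 : r p < r x := lt_of_le_of_ne (hall p) (hmin p (by omega))
  have h2 := hall (p + 2)
  have h3 := h.le p
  obtain ⟨c, hc⟩ := h.dvd p hpn
  rw [hs] at hc ⊢
  -- The sum of the neighbours is a positive multiple of the maximum, smaller than twice it.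
  have hc2 : c < 2 := by
    by_contra hcc
    have : r x * 2 ≤ r x * c := Nat.mul_le_mul_left _ (by omega)
    omega
  have hc1 : c ≠ 0 := by
    rintro rfl
    omega
  obtain rfl : c = 1 := by omega
  omega

theorem ArithChain.removeAt {a n p : ℕ} {r : ℕ → ℕ} (h : ArithChain a (n + 1) r) (hp : p < n)
    (hleaf : r (p + 1) = r p + r (p + 2)) : ArithChain a n (removeAt (p + 1) r) := by
  unfold _root_.removeAt
  refine ⟨by simp [h.zero], fun i => ?_, fun i hi => ?_, fun i hi => ?_⟩
  · split_ifs <;> exact h.le _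
  · rw [if_neg (by omega)]
    exact h.tail _ (by omega)
  · rcases lt_trichotomy i p with hip | rfl | hip
    · rcases Nat.lt_or_ge (i + 1) p with h2 | h2
      · simp only [if_pos (show i < p + 1 by omega), if_pos (show i + 1 < p + 1 by omega),
          if_pos (show i + 2 < p + 1 by omega)]
        exact h.dvd i (by omega)
      · obtain rfl : p = i + 1 := by omega
        simp only [if_pos (show i < i + 1 + 1 by omega), if_pos (show i + 1 < i + 1 + 1 by omega),
          if_neg (show ¬ i + 2 < i + 1 + 1 by omega)]
        have := h.dvd i (by omega)
        rw [hleaf] at this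
        have e : r i + (r (i + 1) + r (i + 1 + 2)) = r (i + 1) + (r i + r (i + 2 + 1)) := by
          rw [show i + 1 + 2 = i + 2 + 1 by omega]; omega
        rw [e] at this
        exact (Nat.dvd_add_right (dvd_refl _)).1 this
    · simp only [if_pos (show i < i + 1 by omega), if_neg (show ¬ i + 1 < i + 1 by omega),
          if_neg (show ¬ i + 2 < i + 1 by omega)]
      have := h.dvd (i + 1) (by omega)
      rw [hleaf] at this
      have e : r i + r (i + 2) + r (i + 1 + 2) = r (i + 1 + 1) + (r i + r (i + 2 + 1)) := by
        rw [show i + 1 + 2 = i + 2 + 1 by omega, show i + 1 + 1 = i + 2 by omega]; omega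
      rw [e] at this
      exact (Nat.dvd_add_right (dvd_refl _)).1 this
    · simp only [if_neg (show ¬ i < p + 1 by omega), if_neg (show ¬ i + 1 < p + 1 by omega),
          if_neg (show ¬ i + 2 < p + 1 by omega)]
      exact h.dvd (i + 1) (by omega)

theorem ArithChain.insertAt {a n p : ℕ} {r : ℕ → ℕ} (h : ArithChain a n r) (hp : p < n) :
    ArithChain a (n + 1) (insertAt (p + 1) r) := by
  unfold _root_.insertAt
  refine ⟨by simp [h.zero], fun i => ?_, fun i hi => ?_, fun i hi => ?_⟩
  · split_ifs
    · exact h.le _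
    · exact (h.le (p + 1)).trans (Nat.le_add_left _ _)
    · exact h.le _
  · rw [if_neg (by omega), if_neg (by omega)]
    exact h.tail _ (by omega)
  · rcases lt_trichotomy i p with hip | rfl | hip
    · rcases Nat.lt_or_ge (i + 1) p with h2 | h2
      · simp only [if_pos (show i < p + 1 by omega), if_pos (show i + 1 < p + 1 by omega),
          if_pos (show i + 2 < p + 1 by omega)]
        exact h.dvd i (by omega)
      · obtain rfl : p = i + 1 := by omega
        simp only [if_pos (show i < i + 1 + 1 by omega), if_pos (show i + 1 < i + 1 + 1 by omega),
          if_neg (show ¬ i + 2 < i + 1 + 1 by omega), if_true, Nat.add_sub_cancel]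
        have := h.dvd i (by omega)
        rw [show r i + (r (i + 1) + r (i + 1 + 1)) = r (i + 1) + (r i + r (i + 2)) by
          rw [show i + 1 + 1 = i + 2 by omega]; omega]
        exact (Nat.dvd_add_right (dvd_refl _)).2 this
    · simp [show ¬ i + 2 < i + 1 by omega]
    · rcases Nat.lt_or_ge (p + 1) i with h2 | h2
      · simp only [if_neg (show ¬ i < p + 1 by omega), if_neg (show ¬ i + 1 < p + 1 by omega),
          if_neg (show ¬ i + 2 < p + 1 by omega), if_neg (show ¬ i = p + 1 by omega),
          if_neg (show ¬ i + 1 = p + 1 by omega), if_neg (show ¬ i + 2 = p + 1 by omega)]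
        obtain ⟨j, rfl⟩ : ∃ j, i = j + 1 := ⟨i - 1, by omega⟩
        exact h.dvd j (by omega)
      · obtain rfl : i = p + 1 := by omega
        simp only [if_neg (show ¬ p + 1 < p + 1 by omega),
          if_neg (show ¬ p + 1 + 1 < p + 1 by omega),
          if_neg (show ¬ p + 1 + 2 < p + 1 by omega), if_true,
          if_neg (show ¬ p + 1 + 1 = p + 1 by omega), if_neg (show ¬ p + 1 + 2 = p + 1 by omega),
          Nat.add_sub_cancel]
        have := h.dvd p (by omega)
        rw [show r p + r (p + 1) + r (p + 1 + 2 - 1) = r (p + 1) + (r p + r (p + 2)) by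
          rw [show p + 1 + 2 - 1 = p + 2 by omega]; omega]
        exact (Nat.dvd_add_right (dvd_refl _)).2 this

theorem insertAt_injective (q : ℕ) : Function.Injective (insertAt q) := by
  intro r s h
  funext i
  by_cases hi : i < q
  · have := congrFun h i
    simpa [insertAt, hi] using this
  · have := congrFun h (i + 1)
    simpa [insertAt, show ¬ i + 1 < q by omega, show ¬ i + 1 = q by omega] using this

theorem insertAt_removeAt {p : ℕ} {r : ℕ → ℕ} (hleaf : r (p + 1) = r p + r (p + 2)) :
    insertAt (p + 1) (removeAt (p + 1) r) = r := by
  funext i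
  unfold insertAt removeAt
  rcases lt_trichotomy i (p + 1) with h | rfl | h
  · simp [h]
  · simp [hleaf]
  · simp only [if_neg (show ¬ i < p + 1 by omega), if_neg (show ¬ i = p + 1 by omega),
      if_neg (show ¬ i - 1 < p + 1 by omega), Nat.sub_add_cancel (show 1 ≤ i by omega)]

/-- A leaf is at least `2`, so inserting one does not change the number of ones. -/
theorem count_insertAt {n p : ℕ} {r : ℕ → ℕ} (hpos : ∀ i, 1 ≤ r i) (hp : p < n) :
    Nat.count (fun i => insertAt (p + 1) r i = 1) (n + 1) = Nat.count (fun i => r i = 1) n := by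
  obtain ⟨c, rfl⟩ : ∃ c, n = p + 1 + c := ⟨n - (p + 1), by omega⟩
  rw [show p + 1 + c + 1 = (p + 1 + 1) + c by omega, Nat.count_add, Nat.count_succ,
    Nat.count_add _ (p + 1) c]
  have h1 : Nat.count (fun i => insertAt (p + 1) r i = 1) (p + 1)
      = Nat.count (fun i => r i = 1) (p + 1) := by
    rw [Nat.count_eq_card_filter_range, Nat.count_eq_card_filter_range]
    congr 1
    apply Finset.filter_congr
    intro i hi
    simp [insertAt, Finset.mem_range.1 hi]
  have h2 : ¬ insertAt (p + 1) r (p + 1) = 1 := by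
    have := hpos p
    have := hpos (p + 1)
    simp only [insertAt, lt_irrefl, if_false, if_true, Nat.add_sub_cancel]
    omega
  have h3 : (fun k => insertAt (p + 1) r (p + 1 + 1 + k) = 1) = fun k => r (p + 1 + k) = 1 := by
    funext k
    simp only [insertAt, if_neg (show ¬ p + 1 + 1 + k < p + 1 by omega),
      if_neg (show ¬ p + 1 + 1 + k = p + 1 by omega), show p + 1 + 1 + k - 1 = p + 1 + k by omega]
  simp only [h1, if_neg h2, h3]
  rfl

/-! ### Counting chains by the position of their first leaf -/

/-- Chains from `1` to `1` of length `n`, with `k` ones at the indices `0, …, n - 1` and with no leaf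
at any index smaller than `p`. -/
def chains (n k p : ℕ) : Set (ℕ → ℕ) :=
  {r | ArithChain 1 n r ∧ Nat.count (fun i => r i = 1) n = k ∧
    ∀ i, i + 1 < p → r (i + 1) ≠ r i + r (i + 2)}

/-- Either the entry at `p + 1` is not a leaf, or it is the first leaf and can be removed. Removing it
may turn the entry at `p` into a leaf, whence the index `p` in `chains n k p`; conversely an inserted
leaf exceeds its neighbours, so that neither of them is a leaf any more. -/
theorem chains_eq_union {n k p : ℕ} (hp : p < n) :
    chains (n + 1) k (p + 1) = chains (n + 1) k (p + 2) ∪ insertAt (p + 1) '' chains n k p := by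
  ext r
  constructor
  · rintro ⟨h, hc, hl⟩
    by_cases hleaf : r (p + 1) = r p + r (p + 2)
    · right
      have hr := h.removeAt hp hleaf
      refine ⟨removeAt (p + 1) r, ⟨hr, ?_, ?_⟩, insertAt_removeAt hleaf⟩
      · rw [← count_insertAt hr.le hp, insertAt_removeAt hleaf, hc]
      · intro i hi
        simp only [removeAt, if_pos (show i < p + 1 by omega), if_pos (show i + 1 < p + 1 by omega),
          if_pos (show i + 2 < p + 1 by omega)]
        exact hl i (by omega)
    · left
      refine ⟨h, hc, fun i hi => ?_⟩
      rcases Nat.lt_or_ge i p with h2 | h2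
      · exact hl i (by omega)
      · obtain rfl : i = p := by omega
        exact hleaf
  · rintro (⟨h, hc, hl⟩ | ⟨s, ⟨h, hc, hl⟩, rfl⟩)
    · exact ⟨h, hc, fun i hi => hl i (by omega)⟩
    · refine ⟨h.insertAt hp, by rw [count_insertAt h.le hp, hc], fun i hi => ?_⟩
      rcases Nat.lt_or_ge (i + 1) p with h2 | h2
      · simp only [insertAt, if_pos (show i < p + 1 by omega), if_pos (show i + 1 < p + 1 by omega),
          if_pos (show i + 2 < p + 1 by omega)]
        exact hl i (by omega)
      · obtain rfl : p = i + 1 := by omega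
        simp only [insertAt, if_pos (show i < i + 1 + 1 by omega),
          if_pos (show i + 1 < i + 1 + 1 by omega),
          if_neg (show ¬ i + 2 < i + 1 + 1 by omega), if_true, Nat.add_sub_cancel]
        have := h.le i
        omega

theorem encard_chains_succ {n k p : ℕ} (hp : p < n) :
    (chains (n + 1) k (p + 1)).encard
      = (chains (n + 1) k (p + 2)).encard + (chains n k p).encard := by
  rw [chains_eq_union hp, Set.encard_union_eq, (insertAt_injective _).encard_image]
  rw [Set.disjoint_left]
  rintro r ⟨-, -, hl⟩ ⟨s, -, rfl⟩
  refine hl p (by omega) ?_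
  simp [insertAt, show ¬ p + 2 < p + 1 by omega]

theorem chains_zero (n k : ℕ) : chains n k 0 = chains n k 1 := by
  simp [chains]

theorem one_mem_chains {k p : ℕ} : (fun _ => 1) ∈ chains k k p := by
  refine ⟨⟨rfl, fun _ => le_rfl, fun _ _ => rfl, fun _ _ => one_dvd _⟩, ?_, fun i _ => by simp⟩
  simp [Nat.count_eq_card_filter_range]

theorem chains_self (k p : ℕ) : chains k k p = {fun _ => 1} := by
  refine Set.eq_singleton_iff_unique_mem.2 ⟨one_mem_chains, ?_⟩
  rintro r ⟨h, hc, -⟩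
  funext i
  by_cases hi : i < k
  · rw [Nat.count_eq_card_filter_range] at hc
    have : (Finset.range k).filter (fun i => r i = 1) = Finset.range k :=
      Finset.eq_of_subset_of_card_le (Finset.filter_subset _ _) (by simp [hc])
    have h2 : i ∈ (Finset.range k).filter (fun i => r i = 1) := by
      rw [this]; exact Finset.mem_range.2 hi
    exact (Finset.mem_filter.1 h2).2
  · exact h.tail i (by omega)

theorem chains_top {n k : ℕ} (hkn : k ≠ n) : chains n k n = ∅ := by
  rw [Set.eq_empty_iff_forall_notMem]
  rintro r ⟨h, hc, hl⟩
  by_cases hne : ∃ i, r i ≠ 1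
  · obtain ⟨p, hp, hleaf⟩ := h.exists_leaf one_pos hne
    exact hl p hp hleaf
  · push Not at hne
    apply hkn
    rw [← hc, Nat.count_eq_card_filter_range]
    simp [hne]

/-- The ballot-type closed form for the number of chains with no leaf below index `p`, where
`j = k + m - p`: it is `C(m+j-1, m) - C(m+j-1, m+k)`. The truncation of `m + j - 1` at
`m = j = 0` gives the correct value `1`. -/
theorem encard_chains {k : ℕ} (hk : 1 ≤ k) (m : ℕ) : ∀ j p, p + j = k + m →
    ∃ N : ℕ, (chains (k + m) k p).encard = N ∧
      N + (m + j - 1).choose (m + k) = (m + j - 1).choose m := by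
  induction m with
  | zero =>
    intro j p hj
    refine ⟨1, by simp [chains_self], ?_⟩
    rw [Nat.choose_eq_zero_of_lt (by omega), Nat.choose_zero_right]
  | succ m ihm =>
    intro j
    induction j with
    | zero =>
      intro p hp
      obtain rfl : p = k + (m + 1) := by omega
      refine ⟨0, by rw [chains_top (by omega)]; simp, ?_⟩
      rw [Nat.choose_eq_zero_of_lt (by omega), Nat.choose_eq_zero_of_lt (by omega)]
    | succ j ihj =>
      intro p hp
      obtain _ | p := p
      · -- Index `0` is never a leaf, so the bounds `0` and `1` give the same set; on the numerical side
        -- this is the symmetry `C(2m+k, m) = C(2m+k, m+k)`.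
        obtain ⟨N, hN, hc⟩ := ihj 1 (by omega)
        refine ⟨N, by rw [chains_zero, hN], ?_⟩
        obtain rfl : j = k + m := by omega
        rw [show m + 1 + (k + m) - 1 = m + (m + k) by omega] at hc
        rw [show m + 1 + (k + m + 1) - 1 = m + (m + k) + 1 by omega,
          show m + 1 + k = m + k + 1 by omega, Nat.choose_succ_succ, Nat.choose_succ_succ]
        have := Nat.choose_symm_add (a := m) (b := m + k)
        rw [show m + 1 + k = m + k + 1 by omega] at hc
        simp only [Nat.succ_eq_add_one]
        omega
      · obtain ⟨N, hN, hc⟩ := ihj (p + 2) (by omega)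
        obtain ⟨N', hN', hc'⟩ := ihm (j + 1) p (by omega)
        refine ⟨N + N', ?_, ?_⟩
        · rw [← add_assoc k m 1] at hN ⊢
          rw [encard_chains_succ (by omega), hN, hN']
          push_cast
          rfl
        · rw [show m + 1 + j - 1 = m + j by omega, show m + 1 + k = m + k + 1 by omega] at hc
          rw [show m + (j + 1) - 1 = m + j by omega] at hc'
          rw [show m + 1 + (j + 1) - 1 = m + j + 1 by omega,
            show m + 1 + k = m + k + 1 by omega, Nat.choose_succ_succ, Nat.choose_succ_succ]
          simp only [Nat.succ_eq_add_one]
          omega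

theorem encard_chains_zero {n k : ℕ} (hk : 1 ≤ k) (hkn : k ≤ n) :
    ∃ N : ℕ, (chains n k 0).encard = N ∧ n * N = k * (2 * n - k - 1).choose (n - k) := by
  obtain ⟨m, rfl⟩ : ∃ m, n = k + m := ⟨n - k, by omega⟩
  obtain ⟨N, hN, hc⟩ := encard_chains hk m (k + m) 0 (by omega)
  refine ⟨N, hN, ?_⟩
  rw [show 2 * (k + m) - k - 1 = m + (k + m) - 1 by omega, Nat.add_sub_cancel_left]
  obtain _ | m := m
  · rw [Nat.choose_eq_zero_of_lt (by omega)] at hc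
    rw [← hc]; ring
  · rw [show m + 1 + (k + (m + 1)) - 1 = m + (m + 1 + k) by omega] at hc ⊢
    have h1 := Nat.choose_symm_add (a := m) (b := m + 1 + k)
    have h2 := Nat.choose_succ_right_eq (m + (m + 1 + k)) m
    rw [Nat.add_sub_cancel_left] at h2
    rw [← h1] at hc
    rw [← hc] at h2 ⊢
    nlinarith

/-- Removing leaves one by one reduces a chain to the constant `a`; hence `a` divides all entries. -/
theorem ArithChain.dvd_all {a : ℕ} (ha : 0 < a) (n : ℕ) :
    ∀ r : ℕ → ℕ, ArithChain a n r → ∀ i, a ∣ r i := by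
  induction n with
  | zero =>
    intro r h i
    rw [h.tail i (Nat.zero_le _)]
  | succ n ih =>
    intro r h i
    by_cases hne : ∃ i, r i ≠ a
    · obtain ⟨p, hp, hleaf⟩ := h.exists_leaf ha hne
      have hr := ih _ (h.removeAt (by omega) hleaf)
      rw [← insertAt_removeAt hleaf]
      generalize _root_.removeAt (p + 1) r = s at hr
      unfold _root_.insertAt
      split_ifs
      · exact hr _
      · exact dvd_add (hr _) (hr _)
      · exact hr _
    · push Not at hne
      rw [hne i]

/-! ### Cutting a cycle open at one of its entries -/

theorem mod_of_lt_two_mul {x n : ℕ} (h : x < 2 * n) : x % n = if x < n then x else x - n := by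
  split_ifs with hx
  · exact Nat.mod_eq_of_lt hx
  · rw [Nat.mod_eq_sub_mod (by omega), Nat.mod_eq_of_lt (by omega)]

/-- The cyclic sequence `c` cut open at `i`: read from `i` onwards once around the cycle, then
continued by the constant `c i`. -/
def unroll {n : ℕ} (i : Fin n) (c : Fin n → ℕ) : ℕ → ℕ :=
  fun t => if t < n then c ⟨(i.val + t) % n, Nat.mod_lt _ i.pos⟩ else c i

/-- The inverse of `unroll`: wrap `r 0, …, r (n - 1)` around the cycle, starting at `i`. -/
def roll {n : ℕ} (i : Fin n) (r : ℕ → ℕ) : Fin n → ℕ :=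
  fun j => r ((j.val + n - i.val) % n)

theorem unroll_of_le {n : ℕ} (i : Fin n) (c : Fin n → ℕ) {t : ℕ} (ht : t ≤ n) :
    unroll i c t = c ⟨(i.val + t) % n, Nat.mod_lt _ i.pos⟩ := by
  unfold unroll
  split_ifs with h
  · rfl
  · obtain rfl : t = n := by omega
    congr 1
    ext
    simp [Nat.mod_eq_of_lt i.isLt]

theorem roll_unroll {n : ℕ} (i : Fin n) (c : Fin n → ℕ) : roll i (unroll i c) = c := by
  funext j
  have hi := i.isLt
  have hj := j.isLt
  unfold roll
  rw [unroll_of_le _ _ (Nat.mod_lt _ i.pos).le]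
  congr 1
  ext
  simp only
  rw [mod_of_lt_two_mul (x := j.val + n - i.val) (by omega)]
  split_ifs
  · rw [mod_of_lt_two_mul (by omega)]
    split_ifs <;> omega
  · rw [mod_of_lt_two_mul (by omega)]
    split_ifs <;> omega

theorem unroll_roll {n : ℕ} (i : Fin n) {r : ℕ → ℕ} (h0 : ∀ t, n ≤ t → r t = r 0) :
    unroll i (roll i r) = r := by
  funext t
  have hi := i.isLt
  unfold unroll roll
  split_ifs with ht
  · simp only
    congr 1
    rw [mod_of_lt_two_mul (x := i.val + t) (by omega)]
    split_ifs
    · rw [mod_of_lt_two_mul (by omega)]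
      split_ifs <;> omega
    · rw [mod_of_lt_two_mul (by omega)]
      split_ifs <;> omega
  · rw [h0 t (by omega), Nat.add_sub_cancel_left, Nat.mod_self]

theorem count_unroll {n : ℕ} (i : Fin n) (c : Fin n → ℕ) :
    Nat.count (fun t => unroll i c t = 1) n
      = (Finset.univ.filter fun j => c j = 1).card := by
  have hi := i.isLt
  rw [Nat.count_eq_card_filter_range]
  refine Finset.card_bij' (fun t _ => (⟨(i.val + t) % n, Nat.mod_lt _ i.pos⟩ : Fin n))
    (fun j _ => (j.val + n - i.val) % n) ?_ ?_ ?_ ?_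
  · intro t ht
    simp only [Finset.mem_filter, Finset.mem_range, Finset.mem_univ, true_and] at ht ⊢
    rw [← unroll_of_le i c ht.1.le]
    exact ht.2
  · intro j hj
    simp only [Finset.mem_filter, Finset.mem_range, Finset.mem_univ, true_and] at hj ⊢
    exact ⟨Nat.mod_lt _ i.pos, (congrFun (roll_unroll i c) j).trans hj⟩
  · intro t ht
    simp only [Finset.mem_filter, Finset.mem_range] at ht
    have h := ht.1
    simp only
    rw [mod_of_lt_two_mul (x := i.val + t) (by omega)]
    split_ifs
    · rw [mod_of_lt_two_mul (by omega)]
      split_ifs <;> omega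
    · rw [mod_of_lt_two_mul (by omega)]
      split_ifs <;> omega
  · intro j _
    have hj := j.isLt
    ext
    simp only
    rw [mod_of_lt_two_mul (x := j.val + n - i.val) (by omega)]
    split_ifs
    · rw [mod_of_lt_two_mul (by omega)]
      split_ifs <;> omega
    · rw [mod_of_lt_two_mul (by omega)]
      split_ifs <;> omega

theorem IsArithCycle.arithChain_unroll {n : ℕ} {d c : Fin n → ℕ} (h : IsArithCycle n d c)
    (i : Fin n) (hmin : ∀ j, c i ≤ c j) : ArithChain (c i) n (unroll i c) := by
  have hi := i.isLt
  refine ⟨?_, fun t => ?_, fun t ht => ?_, fun t ht => ?_⟩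
  · rw [unroll_of_le i c (Nat.zero_le _)]
    congr 1
    ext
    simp [Nat.mod_eq_of_lt hi]
  · unfold unroll
    split_ifs
    · exact hmin _
    · exact le_rfl
  · simp [unroll, show ¬ t < n by omega]
  · rw [unroll_of_le i c (by omega), unroll_of_le i c (by omega), unroll_of_le i c (by omega)]
    refine Dvd.intro_left (d ⟨(i.val + (t + 1)) % n, Nat.mod_lt _ i.pos⟩) ?_
    rw [h.2.2.2, add_comm]
    congr 2
    · ext
      simp only
      rw [mod_of_lt_two_mul (x := i.val + (t + 1)) (by omega),
        mod_of_lt_two_mul (x := i.val + t) (by omega)]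
      split_ifs
      all_goals
        rw [mod_of_lt_two_mul (by omega)]
        split_ifs <;> omega
    · ext
      simp only
      rw [Nat.mod_add_mod]
      rfl

/-- Cutting the cycle open at a minimum shows that the minimum divides every entry, hence their
greatest common divisor, which is `1`. -/
theorem IsArithCycle.exists_eq_one {n : ℕ} (hn : 0 < n) {d c : Fin n → ℕ}
    (h : IsArithCycle n d c) : ∃ i, c i = 1 := by
  obtain ⟨i, -, hi⟩ := Finset.exists_min_image (Finset.univ : Finset (Fin n)) c
    ⟨⟨0, hn⟩, Finset.mem_univ _⟩
  have hc := h.arithChain_unroll i fun j => hi j (Finset.mem_univ _)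
  have hd := hc.dvd_all (h.2.1 i) n
  refine ⟨i, Nat.dvd_one.1 ?_⟩
  rw [← h.2.2.1]
  refine Finset.dvd_gcd fun j _ => ?_
  rw [← congrFun (roll_unroll i c) j]
  exact hd _

/-- The arithmetical structures on the `n`-cycle with exactly `k` entries of `r` equal to `1`. -/
def cycles (n k : ℕ) : Set ((Fin n → ℕ) × (Fin n → ℕ)) :=
  {p | IsArithCycle n p.1 p.2 ∧ (Finset.univ.filter fun i => p.2 i = 1).card = k}

theorem IsArithCycle.fst_unique {n : ℕ} {d d' c : Fin n → ℕ} (h : IsArithCycle n d c)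
    (h' : IsArithCycle n d' c) : d = d' := by
  funext j
  exact Nat.eq_of_mul_eq_mul_right (h.2.1 j) ((h.2.2.2 j).trans (h'.2.2.2 j).symm)

/-- Since the chain starts with `1`, both the divisibility at `i` and the condition on the gcd hold
automatically after wrapping it around the cycle. -/
theorem exists_isArithCycle_roll {n : ℕ} (i : Fin n) {r : ℕ → ℕ} (h : ArithChain 1 n r) :
    ∃ d, IsArithCycle n d (roll i r) := by
  have hi := i.isLt
  have hpos : ∀ j, 0 < roll i r j := fun j => h.le _
  have hone : roll i r i = 1 := by
    unfold roll
    rw [Nat.add_sub_cancel_left, Nat.mod_self, h.zero]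
  have hdvd : ∀ j : Fin n, roll i r j ∣
      roll i r ⟨(j.val + 1) % n, Nat.mod_lt _ j.pos⟩
        + roll i r ⟨(j.val + n - 1) % n, Nat.mod_lt _ j.pos⟩ := by
    intro j
    have hj := j.isLt
    obtain ⟨t, ht⟩ : ∃ t, t = (j.val + n - i.val) % n := ⟨_, rfl⟩
    have htn : t < n := ht ▸ Nat.mod_lt _ i.pos
    obtain _ | t := t
    · have : roll i r j = 1 := by
        unfold roll
        rw [← ht, h.zero]
      rw [this]
      exact one_dvd _
    · have h1 : roll i r ⟨(j.val + 1) % n, Nat.mod_lt _ j.pos⟩ = r (t + 2) := by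
        have : ((j.val + 1) % n + n - i.val) % n = if t + 2 < n then t + 2 else 0 := by
          rw [mod_of_lt_two_mul (by omega)] at ht
          rw [mod_of_lt_two_mul (x := j.val + 1) (by omega)]
          split_ifs at ht ⊢
          all_goals
            rw [mod_of_lt_two_mul (by omega)]
            split_ifs <;> omega
        unfold roll
        simp only
        rw [this]
        split_ifs
        · rfl
        · rw [h.zero, h.tail _ (by omega)]
      have h2 : roll i r ⟨(j.val + n - 1) % n, Nat.mod_lt _ j.pos⟩ = r t := by
        unfold roll
        simp only
        congr 1
        rw [mod_of_lt_two_mul (by omega)] at ht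
        rw [mod_of_lt_two_mul (x := j.val + n - 1) (by omega)]
        split_ifs at ht ⊢
        all_goals
          rw [mod_of_lt_two_mul (by omega)]
          split_ifs <;> omega
      have h3 : roll i r j = r (t + 1) := by
        unfold roll
        rw [← ht]
      rw [h1, h2, h3, add_comm (r (t + 2))]
      exact h.dvd t htn
  choose d hd using hdvd
  refine ⟨d, fun j => ?_, hpos, ?_, fun j => by rw [hd j, mul_comm]⟩
  · refine Nat.pos_of_ne_zero fun h0 => ?_
    have h1 := hd j
    have h2 := hpos ⟨(j.val + 1) % n, Nat.mod_lt _ j.pos⟩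
    rw [h0, mul_zero] at h1
    omega
  · rw [← Nat.dvd_one, ← hone]
    exact Finset.gcd_dvd (Finset.mem_univ i)

theorem encard_cycles_at {n k : ℕ} (i : Fin n) :
    {p ∈ cycles n k | p.2 i = 1}.encard = (chains n k 0).encard := by
  have hinj : Set.InjOn (fun p : (Fin n → ℕ) × (Fin n → ℕ) => unroll i p.2)
      {p ∈ cycles n k | p.2 i = 1} := by
    rintro ⟨d, c⟩ ⟨⟨h, -⟩, -⟩ ⟨d', c'⟩ ⟨⟨h', -⟩, -⟩ he
    have hc : c = c' := by
      rw [← roll_unroll i c, ← roll_unroll i c']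
      exact congrArg _ he
    subst hc
    exact Prod.ext (h.fst_unique h') rfl
  rw [← hinj.encard_image]
  congr 1
  ext r
  constructor
  · rintro ⟨⟨d, c⟩, ⟨⟨h, hk⟩, h1⟩, rfl⟩
    have h1 : c i = 1 := h1
    have h : IsArithCycle n d c := h
    have := h.arithChain_unroll i fun j => by rw [h1]; exact h.2.1 j
    rw [h1] at this
    exact ⟨this, (count_unroll i c).trans hk, fun i hi => absurd hi (by omega)⟩
  · rintro ⟨h, hk, -⟩
    obtain ⟨d, hd⟩ := exists_isArithCycle_roll i h
    have hu : unroll i (roll i r) = r := unroll_roll i fun t ht => by rw [h.tail t ht, h.zero]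
    refine ⟨(d, roll i r), ⟨⟨hd, ?_⟩, ?_⟩, hu⟩
    · rw [← count_unroll i, hu, hk]
    · show r _ = 1
      rw [Nat.add_sub_cancel_left, Nat.mod_self, h.zero]

/-! ### Counting structures on the cycle -/

theorem finite_cycles {n k : ℕ} (hk : 1 ≤ k) (hkn : k ≤ n) : (cycles n k).Finite := by
  obtain ⟨N, hN, -⟩ := encard_chains_zero hk hkn
  have : cycles n k ⊆ ⋃ i, {p ∈ cycles n k | p.2 i = 1} := by
    intro p hp
    obtain ⟨i, hi⟩ := hp.1.exists_eq_one (by omega)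
    exact Set.mem_iUnion.2 ⟨i, hp, hi⟩
  refine Set.Finite.subset (Set.finite_iUnion fun i => ?_) this
  refine Set.finite_of_encard_eq_coe (k := N) ?_
  rw [encard_cycles_at, hN]

/-- Count the pairs of a structure and an index `i` with `r i = 1` in two ways: there are `k` such
indices for each structure, and as many structures for each index as there are chains. -/
theorem ncard_cycles {n k : ℕ} (hk : 1 ≤ k) (hkn : k ≤ n) :
    (cycles n k).ncard = (2 * n - k - 1).choose (n - k) := by
  classical
  obtain ⟨N, hN, hc⟩ := encard_chains_zero hk hkn
  have hfin := finite_cycles hk hkn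
  have key := Finset.sum_card_bipartiteAbove_eq_sum_card_bipartiteBelow
    (s := hfin.toFinset) (t := (Finset.univ : Finset (Fin n))) (fun p i => p.2 i = 1)
  have h1 : ∀ p ∈ hfin.toFinset,
      (Finset.univ.bipartiteAbove (fun p i => p.2 i = 1) p).card = k := by
    intro p hp
    exact (hfin.mem_toFinset.1 hp).2
  have h2 : ∀ i ∈ (Finset.univ : Finset (Fin n)),
      (hfin.toFinset.bipartiteBelow (fun p i => p.2 i = 1) i).card = N := by
    intro i _
    rw [← Set.ncard_coe_finset, Set.ncard_def]
    have : ((hfin.toFinset.bipartiteBelow (fun p i => p.2 i = 1) i : Finset _) :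
        Set ((Fin n → ℕ) × (Fin n → ℕ))) = {p ∈ cycles n k | p.2 i = 1} := by
      ext p
      simp [Finset.bipartiteBelow]
    rw [this, encard_cycles_at, hN]
    rfl
  rw [Finset.sum_congr rfl h1, Finset.sum_congr rfl h2, Finset.sum_const, Finset.sum_const,
    Finset.card_univ, Fintype.card_fin, smul_eq_mul, smul_eq_mul, hc,
    ← Set.ncard_eq_toFinset_card _ hfin, mul_comm] at key
  exact Nat.eq_of_mul_eq_mul_left (by omega) key

theorem sum_choose {n : ℕ} (hn : 0 < n) :
    ∑ k ∈ Finset.Icc 1 n, (2 * n - k - 1).choose (n - k) = (2 * n - 1).choose (n - 1) := by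
  obtain ⟨m, rfl⟩ : ∃ m, n = m + 1 := ⟨n - 1, by omega⟩
  have h := Nat.sum_Icc_choose (m + m) m
  rw [show 2 * (m + 1) - 1 = m + (m + 1) by omega, Nat.add_sub_cancel, Nat.choose_symm_add,
    show m + (m + 1) = m + m + 1 by omega, ← h]
  refine Finset.sum_nbij' (fun k => 2 * (m + 1) - k - 1) (fun j => 2 * (m + 1) - j - 1)
    ?_ ?_ ?_ ?_ ?_
  all_goals
    intro k hk
    rw [Finset.mem_Icc] at hk
  · rw [Finset.mem_Icc]; omega
  · rw [Finset.mem_Icc]; omega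
  · omega
  · omega
  · exact Nat.choose_symm_of_eq_add (by omega)

/-- For `n ≥ 3` and `1 ≤ k ≤ n`, the number of arithmetical structures `(d, r)` on the
cycle `C_n` with `r(1) = k` equals `C(2n-k-1, n-k)`; consequently, the total number of
arithmetical structures on `C_n` equals `C(2n-1, n-1)`. -/
theorem arith_cycle_count (n k : ℕ) (hn : 3 ≤ n) (hk1 : 1 ≤ k) (hkn : k ≤ n) :
    Nat.card {p : (Fin n → ℕ) × (Fin n → ℕ) // IsArithCycle n p.1 p.2 ∧
        (Finset.univ.filter fun i => p.2 i = 1).card = k} =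
      (2 * n - k - 1).choose (n - k) ∧
    Nat.card {p : (Fin n → ℕ) × (Fin n → ℕ) // IsArithCycle n p.1 p.2} =
      (2 * n - 1).choose (n - 1) := by
  refine ⟨ncard_cycles hk1 hkn, ?_⟩
  rw [← sum_choose (by omega)]
  classical
  have hfin : ∀ k : Finset.Icc 1 n, (cycles n k).Finite := fun k =>
    finite_cycles (Finset.mem_Icc.1 k.2).1 (Finset.mem_Icc.1 k.2).2
  have hunion : {p : (Fin n → ℕ) × (Fin n → ℕ) | IsArithCycle n p.1 p.2}
      = ((Finset.univ.biUnion fun k => (hfin k).toFinset : Finset _) : Set _) := by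
    ext p
    simp only [Set.mem_ofPred_eq, Finset.coe_biUnion, Set.mem_iUnion, Set.Finite.coe_toFinset,
      Finset.coe_univ, Set.mem_univ, exists_const]
    constructor
    · intro h
      obtain ⟨i, hi⟩ := h.exists_eq_one (by omega)
      refine ⟨⟨(Finset.univ.filter fun i => p.2 i = 1).card, Finset.mem_Icc.2 ⟨?_, ?_⟩⟩, h, rfl⟩
      · exact Finset.card_pos.2 ⟨i, by simp [hi]⟩
      · exact (Finset.card_le_univ _).trans_eq (Fintype.card_fin n)
    · rintro ⟨k, h, -⟩
      exact h
  have hcard : Nat.card {p : (Fin n → ℕ) × (Fin n → ℕ) // IsArithCycle n p.1 p.2}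
      = {p : (Fin n → ℕ) × (Fin n → ℕ) | IsArithCycle n p.1 p.2}.ncard := rfl
  rw [hcard, hunion, Set.ncard_coe_finset, Finset.card_biUnion, ← Finset.sum_coe_sort (Finset.Icc 1 n)]
  · refine Finset.sum_congr rfl fun k _ => ?_
    rw [← Set.ncard_eq_toFinset_card _ (hfin k)]
    exact ncard_cycles (Finset.mem_Icc.1 k.2).1 (Finset.mem_Icc.1 k.2).2
  · intro k _ l _ hkl
    refine Finset.disjoint_left.2 fun p hp hp' => ?_
    rw [Set.Finite.mem_toFinset] at hp hp'
    exact hkl (Subtype.ext (hp.2.symm.trans hp'.2))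
end

section
/- Let n ≥ 3 and let k be an integer with 2n ≤ k ≤ 3n−1. The number of arithmetical structures (d, r) on the cycle C_n with d_1 + ⋯ + d_n = k equals binomial(k−n−1, k−2n). -/
/-! ### Encoded structures and insertion of a vertex -/

/-- `(d, r)` is an arithmetical structure on the cycle with `m + 1` vertices, and
`x i = ⌈r (i + 1) / r i⌉ - 1`. Indices are added modulo `m + 1`, and the cases of one and two
vertices are allowed (a neighbour is then counted twice). -/
structure ArithCode (m : ℕ) (d r x : Fin (m + 1) → ℕ) : Prop where
  pos : ∀ i, 0 < r i
  prim : ∀ c, (∀ i, c ∣ r i) → c = 1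
  eqn : ∀ i, d i * r i = r (i + 1) + r (i - 1)
  lower : ∀ i, x i * r i < r (i + 1)
  upper : ∀ i, r (i + 1) ≤ (x i + 1) * r i

/-- Insertion of a vertex between the last and the first one: effect on `r`. -/
def insR {m : ℕ} (r : Fin (m + 1) → ℕ) : Fin (m + 2) → ℕ :=
  Fin.snoc (α := fun _ => ℕ) r (r 0 + r (Fin.last m))

/-- Insertion of a vertex between the last and the first one: effect on `d`. For `m = 0` the only
old vertex is a neighbour of the new one on both sides. -/
def insD {m : ℕ} (d : Fin (m + 1) → ℕ) : Fin (m + 2) → ℕ :=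
  Fin.snoc (α := fun _ => ℕ)
    (fun i => d i + (if i = 0 then 1 else 0) + (if i = Fin.last m then 1 else 0)) 1

/-- Insertion of a vertex between the last and the first one: effect on `x`. -/
def insX {m : ℕ} (x : Fin (m + 1) → ℕ) : Fin (m + 2) → ℕ :=
  Fin.snoc (α := fun _ => ℕ) (fun i => x i + (if i = Fin.last m then 1 else 0)) 0

/-! ### Cyclic indices -/

lemma snoc_castSucc_add_one {m : ℕ} (r : Fin (m + 1) → ℕ) (v : ℕ) (i : Fin (m + 1)) :
    Fin.snoc (α := fun _ => ℕ) r v (i.castSucc + 1) = if i = Fin.last m then v else r (i + 1) := by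
  split_ifs with h
  · subst h
    rw [Fin.coeSucc_eq_succ, Fin.succ_last, Fin.snoc_last]
  · have : i.castSucc + 1 = (i + 1).castSucc := by
      apply Fin.ext
      rw [Fin.coeSucc_eq_succ, Fin.val_castSucc, Fin.val_succ,
        Fin.val_add_one_of_lt (Fin.lt_last_iff_ne_last.mpr h)]
    rw [this, Fin.snoc_castSucc]

lemma snoc_castSucc_sub_one {m : ℕ} (r : Fin (m + 1) → ℕ) (v : ℕ) (i : Fin (m + 1)) :
    Fin.snoc (α := fun _ => ℕ) r v (i.castSucc - 1) = if i = 0 then v else r (i - 1) := by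
  split_ifs with h
  · subst h
    have : (Fin.castSucc (0 : Fin (m + 1)) - 1) = Fin.last (m + 1) := by
      rw [sub_eq_iff_eq_add]; simp
    rw [this, Fin.snoc_last]
  · have : i.castSucc - 1 = (i - 1).castSucc := by
      apply Fin.ext
      rw [Fin.val_sub_one_of_ne_zero (by simpa using h), Fin.val_castSucc, Fin.val_castSucc,
        Fin.val_sub_one_of_ne_zero h]
    rw [this, Fin.snoc_castSucc]

lemma last_sub_one (m : ℕ) : Fin.last (m + 1) - 1 = (Fin.last m).castSucc := by
  rw [sub_eq_iff_eq_add, Fin.coeSucc_eq_succ, Fin.succ_last]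

lemma zero_sub_one_fin (m : ℕ) : (0 : Fin (m + 1)) - 1 = Fin.last m := by
  rw [sub_eq_iff_eq_add, Fin.last_add_one]

open scoped Fin.CommRing Fin.NatCast in
/-- A vector that is weakly decreasing around the cycle is constant. -/
lemma const_of_cyclic_antitone {m : ℕ} (r : Fin (m + 1) → ℕ) (h : ∀ i, r (i + 1) ≤ r i)
    (i j : Fin (m + 1)) : r i = r j := by
  have key : ∀ (t : ℕ) (i : Fin (m + 1)), r (i + (t : Fin (m + 1))) ≤ r i := by
    intro t
    induction t with
    | zero => simp
    | succ t ih =>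
      intro i
      have := h (i + (t : Fin (m + 1)))
      push_cast
      rw [← add_assoc]
      exact this.trans (ih i)
  have le : ∀ i j, r j ≤ r i := by
    intro i j
    have := key (j - i).val i
    simpa using this
  exact le_antisymm (le j i) (le i j)

/-! ### Rotation, insertion and uniqueness for encoded structures -/

namespace ArithCode

variable {m : ℕ}

lemma rotate {d r x : Fin (m + 1) → ℕ} (h : ArithCode m d r x) (c : Fin (m + 1)) :
    ArithCode m (fun i => d (i + c)) (fun i => r (i + c)) (fun i => x (i + c)) where
  pos i := h.pos _
  prim e he := h.prim e fun i => by simpa using he (i - c)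
  eqn i := by
    have := h.eqn (i + c)
    rwa [show i + 1 + c = i + c + 1 by abel, show i - 1 + c = i + c - 1 by abel]
  lower i := by
    have := h.lower (i + c)
    rwa [show i + 1 + c = i + c + 1 by abel]
  upper i := by
    have := h.upper (i + c)
    rwa [show i + 1 + c = i + c + 1 by abel]

/-- The equation at an old vertex after the insertion, against the equation before it. -/
lemma eqn_aux (d r : Fin (m + 1) → ℕ) (i : Fin (m + 1)) :
    (d i + (if i = 0 then 1 else 0) + (if i = Fin.last m then 1 else 0)) * r i =
        (if i = Fin.last m then r 0 + r (Fin.last m) else r (i + 1)) +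
          (if i = 0 then r 0 + r (Fin.last m) else r (i - 1)) ↔
      d i * r i = r (i + 1) + r (i - 1) := by
  have e1 : (if i = Fin.last m then r 0 + r (Fin.last m) else r (i + 1)) =
      r (i + 1) + (if i = Fin.last m then 1 else 0) * r i := by
    split_ifs with h
    · subst h; rw [Fin.last_add_one, one_mul]
    · simp
  have e2 : (if i = 0 then r 0 + r (Fin.last m) else r (i - 1)) =
      r (i - 1) + (if i = 0 then 1 else 0) * r i := by
    split_ifs with h
    · subst h; rw [zero_sub_one_fin, one_mul, add_comm]
    · simp
  rw [e1, e2, add_mul, add_mul]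
  omega

lemma insert_iff (d r x : Fin (m + 1) → ℕ) :
    ArithCode (m + 1) (insD d) (insR r) (insX x) ↔ ArithCode m d r x := by
  have eL : (Fin.last (m + 1) : Fin (m + 2)) + 1 = (0 : Fin (m + 1)).castSucc := by simp
  constructor
  · intro h
    refine ⟨fun i => ?_, fun c hc => h.prim c fun i => ?_, fun i => ?_, fun i => ?_, fun i => ?_⟩
    · simpa [insR] using h.pos i.castSucc
    · refine Fin.lastCases ?_ (fun i => ?_) i
      · simpa [insR] using dvd_add (hc 0) (hc (Fin.last m))
      · simpa [insR] using hc i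
    · have := h.eqn i.castSucc
      simp only [insD, insR, snoc_castSucc_add_one, snoc_castSucc_sub_one, Fin.snoc_castSucc] at this
      exact (eqn_aux d r i).1 this
    · have := h.lower i.castSucc
      simp only [insX, insR, snoc_castSucc_add_one, Fin.snoc_castSucc] at this
      split_ifs at this with hi
      · subst hi
        rw [Fin.last_add_one]
        linarith
      · simpa using this
    · have := h.upper i.castSucc
      simp only [insX, insR, snoc_castSucc_add_one, Fin.snoc_castSucc] at this
      split_ifs at this with hi
      · subst hi
        rw [Fin.last_add_one]
        linarith
      · simpa using this
  · intro h
    have p0 := h.pos 0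
    have pl := h.pos (Fin.last m)
    refine ⟨fun i => ?_, fun c hc => h.prim c fun i => ?_, fun i => ?_, fun i => ?_, fun i => ?_⟩
    · refine Fin.lastCases ?_ (fun i => ?_) i
      · simp [insR, p0]
      · simpa [insR] using h.pos i
    · simpa [insR] using hc i.castSucc
    · refine Fin.lastCases ?_ (fun i => ?_) i
      · rw [eL, last_sub_one]
        simp only [insD, insR, Fin.snoc_castSucc, Fin.snoc_last, one_mul]
      · simp only [insD, insR, snoc_castSucc_add_one, snoc_castSucc_sub_one, Fin.snoc_castSucc]
        exact (eqn_aux d r i).2 (h.eqn i)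
    · refine Fin.lastCases ?_ (fun i => ?_) i
      · rw [eL]
        simp only [insX, insR, Fin.snoc_castSucc, Fin.snoc_last]
        omega
      · have := h.lower i
        simp only [insX, insR, snoc_castSucc_add_one, Fin.snoc_castSucc]
        split_ifs with hi
        · subst hi
          rw [Fin.last_add_one] at this
          linarith
        · simpa using this
    · refine Fin.lastCases ?_ (fun i => ?_) i
      · rw [eL]
        simp only [insX, insR, Fin.snoc_castSucc, Fin.snoc_last]
        omega
      · have := h.upper i
        simp only [insX, insR, snoc_castSucc_add_one, Fin.snoc_castSucc]
        split_ifs with hi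
        · subst hi
          rw [Fin.last_add_one] at this
          linarith
        · simpa using this

/-- If the last vertex has `x = 0` and the one before it has `x ≥ 1`, then `(d, r)` arises by
insertion: `d r = r_{next} + r_{prev}` is positive and less than `2 r` at the last vertex, so
`d = 1` and `r = r_{next} + r_{prev}` there. -/
lemma eq_insert {d r x : Fin (m + 2) → ℕ} (h : ArithCode (m + 1) d r x)
    (h0 : x (Fin.last (m + 1)) = 0) (h1 : 1 ≤ x (Fin.last m).castSucc) :
    ∃ d' r', d = insD d' ∧ r = insR r' := by
  have eL : (Fin.last (m + 1) : Fin (m + 2)) + 1 = (0 : Fin (m + 1)).castSucc := by simp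
  have hE := h.eqn (Fin.last (m + 1))
  have hU := h.upper (Fin.last (m + 1))
  have hL := h.lower (Fin.last m).castSucc
  rw [eL, last_sub_one] at hE
  rw [eL, h0] at hU
  rw [Fin.coeSucc_eq_succ, Fin.succ_last] at hL
  have hp := h.pos (Fin.castSucc (0 : Fin (m + 1)))
  have hlt : r (Fin.last m).castSucc < r (Fin.last (m + 1)) :=
    (Nat.le_mul_of_pos_left _ h1).trans_lt hL
  have hd1 : d (Fin.last (m + 1)) = 1 := by
    have a : d (Fin.last (m + 1)) < 2 := by
      by_contra hc
      have := Nat.mul_le_mul_right (r (Fin.last (m + 1))) (not_lt.1 hc)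
      omega
    have b : d (Fin.last (m + 1)) ≠ 0 := by
      intro hc
      rw [hc] at hE
      omega
    omega
  rw [hd1, one_mul] at hE
  -- At an old vertex, `d` is at least the number of edges towards the new vertex.
  have hd : ∀ i : Fin (m + 1),
      (if i = 0 then 1 else 0) + (if i = Fin.last m then 1 else 0) ≤ d i.castSucc := by
    intro i
    have hi := h.eqn i.castSucc
    have e1 : (if i = Fin.last m then 1 else 0) * r i.castSucc ≤ r (i.castSucc + 1) := by
      split_ifs with hh
      · subst hh
        rw [Fin.coeSucc_eq_succ, Fin.succ_last, one_mul]
        exact hlt.le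
      · simp
    have e2 : (if i = 0 then 1 else 0) * r i.castSucc ≤ r (i.castSucc - 1) := by
      split_ifs with hh
      · subst hh
        have : (Fin.castSucc (0 : Fin (m + 1)) - 1) = Fin.last (m + 1) := by
          rw [sub_eq_iff_eq_add, eL]
        rw [this]
        omega
      · simp
    refine Nat.le_of_mul_le_mul_right ?_ (h.pos i.castSucc)
    rw [hi, add_mul]
    omega
  refine ⟨fun i => d i.castSucc -
      ((if i = 0 then 1 else 0) + (if i = Fin.last m then 1 else 0)), fun i => r i.castSucc, ?_, ?_⟩
  · funext i
    refine Fin.lastCases ?_ (fun i => ?_) i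
    · simpa [insD] using hd1
    · have := hd i
      simp only [insD, Fin.snoc_castSucc]
      omega
  · funext i
    refine Fin.lastCases ?_ (fun i => ?_) i
    · simpa only [insR, Fin.snoc_last] using hE
    · simp only [insR, Fin.snoc_castSucc]

lemma d_unique {d d' r x x' : Fin (m + 1) → ℕ} (h : ArithCode m d r x)
    (h' : ArithCode m d' r x') : d = d' := by
  funext i
  exact Nat.eq_of_mul_eq_mul_right (h.pos i) ((h.eqn i).trans (h'.eqn i).symm)

lemma x_unique {d d' r x x' : Fin (m + 1) → ℕ} (h : ArithCode m d r x)
    (h' : ArithCode m d' r x') : x = x' := by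
  funext i
  have a := Nat.lt_of_mul_lt_mul_right ((h.lower i).trans_le (h'.upper i))
  have b := Nat.lt_of_mul_lt_mul_right ((h'.lower i).trans_le (h.upper i))
  omega

lemma eq_one_of_zero {d r : Fin (m + 1) → ℕ} (h : ArithCode m d r 0) : r = fun _ => 1 := by
  have hc := const_of_cyclic_antitone r fun i => by simpa using h.upper i
  have := h.prim (r 0) fun i => (hc 0 i).dvd
  funext i
  rw [hc i 0, this]

lemma const_one : ArithCode m (fun _ => 2) (fun _ => 1) 0 where
  pos i := by simp
  prim c hc := by simpa using hc 0
  eqn i := by simp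
  lower i := by simp
  upper i := by simp

end ArithCode

/-! ### The bijection -/

open scoped Fin.CommRing Fin.NatCast in
/-- Every vector `x` of natural numbers on a cycle is zero, or nowhere zero, or after a rotation of
the form `insX x'`: induction along this trichotomy. -/
lemma cycle_induction {P : ∀ m, (Fin (m + 1) → ℕ) → Prop} (zero : ∀ m, P m 0)
    (nozero : ∀ m x, (∀ i, 1 ≤ x i) → P m x)
    (rot : ∀ m x c, P m (fun i => x (i + c)) → P m x)
    (ins : ∀ m x, P m x → P (m + 1) (insX x)) (m : ℕ) (x : Fin (m + 1) → ℕ) : P m x := by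
  induction m with
  | zero =>
    by_cases h : x 0 = 0
    · have : x = 0 := by
        funext i
        rw [Fin.fin_one_eq_zero i, h]; rfl
      exact this ▸ zero 0
    · refine nozero 0 x fun i => ?_
      rw [Fin.fin_one_eq_zero i]; omega
  | succ m ih =>
    by_cases hz : ∀ i, 1 ≤ x i
    · exact nozero _ _ hz
    by_cases hj : ∃ j, x j = 0 ∧ 1 ≤ x (j - 1)
    · obtain ⟨j, hj0, hj1⟩ := hj
      apply rot _ _ (j - Fin.last (m + 1))
      set y : Fin (m + 2) → ℕ := fun i => x (i + (j - Fin.last (m + 1))) with hy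
      have y0 : y (Fin.last (m + 1)) = 0 := by simpa [hy] using hj0
      have y1 : 1 ≤ y (Fin.last m).castSucc := by
        rw [← last_sub_one]
        have : Fin.last (m + 1) - 1 + (j - Fin.last (m + 1)) = j - 1 := by abel
        simpa [hy, this] using hj1
      have : y = insX (fun i => y i.castSucc - if i = Fin.last m then 1 else 0) := by
        funext i
        refine Fin.lastCases ?_ (fun i => ?_) i
        · simpa [insX] using y0
        · by_cases hi : i = Fin.last m
          · subst hi; simp [insX]; omega
          · simp [insX, hi]
      rw [this]
      exact ins _ _ (ih _)
    · push Not at hj hz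
      -- zeros propagate to the left around the whole cycle
      obtain ⟨i, hi⟩ := hz
      have hp : ∀ (t : ℕ), x (i - (t : Fin (m + 2))) = 0 := by
        intro t
        induction t with
        | zero => simpa using hi
        | succ t iht =>
          have := hj _ iht
          push_cast
          rw [← sub_sub]; omega
      have : x = 0 := by
        funext j
        simpa using hp (i - j).val
      exact this ▸ zero _

lemma sum_insX {m : ℕ} (x : Fin (m + 1) → ℕ) : ∑ i, insX x i = ∑ i, x i + 1 := by
  rw [Fin.sum_univ_castSucc]
  simp [insX, Finset.sum_add_distrib]

lemma sum_insD {m : ℕ} (d : Fin (m + 1) → ℕ) : ∑ i, insD d i = ∑ i, d i + 3 := by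
  rw [Fin.sum_univ_castSucc]
  simp [insD, Finset.sum_add_distrib]

/-- The map `(d, r) ↦ x` is injective, its image consists of the `x` with `∑ x < m + 1`, and
`∑ d = 2 (m + 1) + ∑ x`. -/
lemma code_main (m : ℕ) (x : Fin (m + 1) → ℕ) :
    (∀ d r, ArithCode m d r x → ∑ i, x i < m + 1 ∧ ∑ i, d i = 2 * (m + 1) + ∑ i, x i) ∧
    (∀ d r d' r', ArithCode m d r x → ArithCode m d' r' x → r = r') ∧
    (∑ i, x i < m + 1 → ∃ d r, ArithCode m d r x) := by
  induction m, x using cycle_induction with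
  | zero m =>
    refine ⟨fun d r h => ?_, fun d r d' r' h h' => ?_, fun _ => ⟨_, _, ArithCode.const_one⟩⟩
    · have hr := h.eq_one_of_zero
      subst hr
      have := h.d_unique ArithCode.const_one
      subst this
      simp [mul_comm]
    · rw [h.eq_one_of_zero, h'.eq_one_of_zero]
  | nozero m x hx =>
    have no : ∀ d r, ¬ ArithCode m d r x := by
      intro d r h
      have hlt : ∀ i, r i < r (i + 1) := fun i =>
        (Nat.le_mul_of_pos_left _ (hx i)).trans_lt (h.lower i)
      obtain ⟨i, hi⟩ := Finite.exists_max r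
      exact absurd (hlt i) (hi _).not_gt
    refine ⟨fun d r h => (no d r h).elim, fun d r _ _ h => (no d r h).elim, fun h => ?_⟩
    have := Finset.sum_le_sum fun i (_ : i ∈ Finset.univ) => hx i
    simp at this
    omega
  | rot m x c ih =>
    have hs : ∀ f : Fin (m + 1) → ℕ, ∑ i, f (i + c) = ∑ i, f i := fun f =>
      Equiv.sum_comp (Equiv.addRight c) f
    obtain ⟨h1, h2, h3⟩ := ih
    refine ⟨fun d r h => ?_, fun d r d' r' h h' => ?_, fun h => ?_⟩
    · have := h1 _ _ (h.rotate c)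
      rwa [hs, hs] at this
    · have := h2 _ _ _ _ (h.rotate c) (h'.rotate c)
      funext i
      simpa using congrFun this (i - c)
    · obtain ⟨d, r, h⟩ := h3 (by rwa [hs])
      exact ⟨_, _, by simpa using h.rotate (-c)⟩
  | ins m x ih =>
    obtain ⟨h1, h2, h3⟩ := ih
    have key : ∀ {d r}, ArithCode (m + 1) d r (insX x) →
        ∃ d' r', d = insD d' ∧ r = insR r' ∧ ArithCode m d' r' x := by
      intro d r h
      obtain ⟨d', r', rfl, rfl⟩ := h.eq_insert (by simp [insX]) (by simp [insX])
      exact ⟨d', r', rfl, rfl, (ArithCode.insert_iff _ _ _).1 h⟩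
    refine ⟨fun d r h => ?_, fun d r d' r' h h' => ?_, fun h => ?_⟩
    · obtain ⟨e, s, rfl, rfl, hs⟩ := key h
      have := h1 _ _ hs
      rw [sum_insX, sum_insD]
      omega
    · obtain ⟨e, s, rfl, rfl, hs⟩ := key h
      obtain ⟨e', s', rfl, rfl, hs'⟩ := key h'
      rw [h2 _ _ _ _ hs hs']
    · rw [sum_insX] at h
      obtain ⟨d, r, hd⟩ := h3 (by omega)
      exact ⟨_, _, (ArithCode.insert_iff _ _ _).2 hd⟩

/-! ### Counting -/

lemma isArithCycle_iff (m : ℕ) (d r : Fin (m + 1) → ℕ) :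
    IsArithCycle (m + 1) d r ↔ ∃ x, ArithCode m d r x := by
  have hn : ∀ i : Fin (m + 1), (⟨(i.val + 1) % (m + 1), Nat.mod_lt _ i.pos⟩ : Fin (m + 1)) = i + 1 :=
    fun i => by apply Fin.ext; simp [Fin.val_add]
  have hp : ∀ i : Fin (m + 1),
      (⟨(i.val + (m + 1) - 1) % (m + 1), Nat.mod_lt _ i.pos⟩ : Fin (m + 1)) = i - 1 := by
    intro i
    rw [eq_sub_iff_add_eq]
    apply Fin.ext
    simp [Fin.val_add]
    rw [show i.val + m + 1 = i.val + (m + 1) by ring]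
    simp [Nat.mod_eq_of_lt i.isLt]
  simp only [IsArithCycle, hn, hp]
  constructor
  · rintro ⟨-, hr, hg, he⟩
    refine ⟨fun i => (r (i + 1) - 1) / r i, hr, fun c hc => ?_, he, fun i => ?_, fun i => ?_⟩
    · exact Nat.dvd_one.1 (hg ▸ Finset.dvd_gcd fun i _ => hc i)
    · have := Nat.div_mul_le_self (r (i + 1) - 1) (r i)
      have := hr (i + 1)
      omega
    · have := Nat.lt_div_mul_add (a := r (i + 1) - 1) (hr i)
      rw [add_mul]
      omega
  · rintro ⟨x, h⟩
    refine ⟨fun i => ?_, h.pos, h.prim _ fun i => Finset.gcd_dvd (Finset.mem_univ i), h.eqn⟩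
    refine Nat.pos_of_mul_pos_right (b := r i) ?_
    rw [h.eqn]
    exact Nat.add_pos_left (h.pos _) _

/-- For `n ≥ 3` and `2n ≤ k ≤ 3n - 1`, the number of arithmetical structures `(d, r)`
on the cycle `C_n` with `d_1 + ⋯ + d_n = k` equals `C(k-n-1, k-2n)`. -/
theorem arith_cycle_count_d_sum (n k : ℕ) (hn : 3 ≤ n) (h1 : 2 * n ≤ k)
    (h2 : k ≤ 3 * n - 1) :
    Nat.card {p : (Fin n → ℕ) × (Fin n → ℕ) // IsArithCycle n p.1 p.2 ∧
        ∑ i, p.1 i = k} = (k - n - 1).choose (k - 2 * n) := by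
  obtain ⟨m, rfl⟩ : ∃ m, n = m + 1 := ⟨n - 1, by omega⟩
  have hex : ∀ x : {x : Fin (m + 1) → ℕ // ∑ i, x i = k - 2 * (m + 1)},
      ∃ p : (Fin (m + 1) → ℕ) × (Fin (m + 1) → ℕ), ArithCode m p.1 p.2 x.1 := by
    intro x
    obtain ⟨d, r, h⟩ := (code_main m x.1).2.2 (by rw [x.2]; omega)
    exact ⟨(d, r), h⟩
  choose F hF using hex
  let G : {x : Fin (m + 1) → ℕ // ∑ i, x i = k - 2 * (m + 1)} →
      {p : (Fin (m + 1) → ℕ) × (Fin (m + 1) → ℕ) // IsArithCycle (m + 1) p.1 p.2 ∧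
        ∑ i, p.1 i = k} := fun x => ⟨F x, (isArithCycle_iff _ _ _).2 ⟨_, hF x⟩, by
      have := ((code_main m x.1).1 _ _ (hF x)).2
      rw [x.2] at this
      omega⟩
  have hG : Function.Bijective G := by
    constructor
    · intro x y hxy
      have e : F x = F y := congrArg Subtype.val hxy
      have hx := hF x
      rw [e] at hx
      exact Subtype.ext (hx.x_unique (hF y))
    · rintro ⟨⟨d, r⟩, hp, hs⟩
      obtain ⟨x, hx⟩ := (isArithCycle_iff _ _ _).1 hp
      have hsum := ((code_main m x).1 _ _ hx).2
      simp only at hs hx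
      refine ⟨⟨x, by omega⟩, Subtype.ext (Prod.ext ?_ ?_)⟩
      all_goals
        have hf := hF ⟨x, by omega⟩
        have hr := (code_main m x).2.1 _ _ _ _ hf hx
      · rw [hr] at hf
        exact hf.d_unique hx
      · exact hr
  rw [← Nat.card_congr (Equiv.ofBijective G hG),
    ← Nat.card_congr (Sym.equivNatSumOfFintype (Fin (m + 1)) (k - 2 * (m + 1))),
    Nat.card_eq_fintype_card, Sym.card_sym_eq_multichoose, Nat.multichoose_eq, Fintype.card_fin]
  congr 1
  omega
end
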